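/- arXiv:2512.21298 — 4 statements merged into one kernel-verified Lean document; each statement's English description precedes it below -/
import Mathlib

section
/- Let k be a positive integer. If G is a finite simple graph of order n at least 2k+2 that has no k-degenerate cut, then the number of edges of G is at least (1/2)·(k + (13·√k)/190 − 1/38)·n. -/
/-- `S` is a (vertex) cut of `G`: deleting the vertices of `S` disconnects `G`. -/
def SimpleGraph.IsCutset {V : Type*} (G : SimpleGraph V) (S : Set V) : Prop :=
  ¬ (G.induce Sᶜ).Preconnected

/-- The set `S` induces a `k`-degenerate subgraph of `G`: every non-empty
subset `T` of `S` contains a vertex with at most `k` neighbors in `T`. -/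
def SimpleGraph.DegenSet {V : Type*} (G : SimpleGraph V) (k : ℕ) (S : Set V) : Prop :=
  ∀ T ⊆ S, T.Nonempty → ∃ v ∈ T, {w ∈ T | G.Adj v w}.ncard ≤ k

open Classical in
lemma cut_core {V : Type*} [Fintype V] (G : SimpleGraph V) (k : ℕ)
    (hcut : ¬ ∃ S : Set V, G.IsCutset S ∧ G.DegenSet k S)
    (A S : Finset V) (a c : V) (ha : a ∈ A) (hc : c ∉ A) (hcS : c ∉ S) (haS : a ∉ S)
    (hN : ∀ v ∈ A, ∀ w, G.Adj v w → w ∈ A ∨ w ∈ S) :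
    ∃ F ⊆ S, F.Nonempty ∧ ∀ v ∈ F, k + 1 ≤ (F.filter (fun w => G.Adj v w)).card := by
  have hS : G.IsCutset (S : Set V) := by
    intro hp
    have h := hp ⟨a, by simpa using haS⟩ ⟨c, by simpa using hcS⟩
    obtain ⟨p⟩ := h
    have key : ∀ (x y : ((S : Set V)ᶜ : Set V)), (G.induce (S : Set V)ᶜ).Walk x y →
        (x : V) ∈ A → (y : V) ∈ A := by
      intro x y p
      induction p with
      | nil => exact id
      | cons h p ih =>
        intro hx
        apply ih
        rcases hN _ hx _ h with h1 | h1
        · exact h1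
        · rename_i w _
          exact absurd (Finset.mem_coe.2 h1) w.2
    exact hc (key _ _ p ha)
  have hD : ¬ G.DegenSet k (S : Set V) := fun h => hcut ⟨_, hS, h⟩
  unfold SimpleGraph.DegenSet at hD
  push Not at hD
  obtain ⟨T, hTS, hT, h⟩ := hD
  refine ⟨T.toFinset, ?_, by simpa using hT, ?_⟩
  · intro x hx
    simpa using hTS (by simpa using hx)
  · intro v hv
    have h1 := h v (by simpa using hv)
    rw [Set.ncard_eq_toFinset_card'] at h1
    refine le_trans h1 (Finset.card_le_card ?_)
    intro w
    simp

open Classical in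
/-- A set where every vertex has more than `k` neighbours has at least `k + 2` vertices. -/
lemma card_F {V : Type*} [Fintype V] (G : SimpleGraph V) (k : ℕ) (F : Finset V)
    (hF : F.Nonempty) (h : ∀ v ∈ F, k + 1 ≤ (F.filter (fun w => G.Adj v w)).card) :
    k + 2 ≤ F.card := by
  obtain ⟨v, hv⟩ := hF
  have h1 := h v hv
  have h2 : F.filter (fun w => G.Adj v w) ⊆ F.erase v := by
    intro w hw
    simp only [Finset.mem_filter] at hw
    simp [hw.1, hw.2.ne']
  have := Finset.card_le_card h2
  rw [Finset.card_erase_of_mem hv] at this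
  omega

open Classical in
lemma nbr_core {V : Type*} [Fintype V] (G : SimpleGraph V) (k : ℕ)
    (hcut : ¬ ∃ S : Set V, G.IsCutset S ∧ G.DegenSet k S)
    (v : V) (hv : G.degree v + 1 < Fintype.card V) :
    ∃ F ⊆ G.neighborFinset v, F.Nonempty ∧
      ∀ v ∈ F, k + 1 ≤ (F.filter (fun w => G.Adj v w)).card := by
  have : ∃ c, c ∉ insert v (G.neighborFinset v) := by
    by_contra! h
    have h1 : insert v (G.neighborFinset v) = Finset.univ := by ext; simp [h]
    have h2 := Finset.card_insert_le v (G.neighborFinset v)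
    rw [h1, Finset.card_univ, G.card_neighborFinset_eq_degree] at h2
    omega
  obtain ⟨c, hc⟩ := this
  simp only [Finset.mem_insert, not_or] at hc
  refine cut_core G k hcut {v} _ v c (by simp) (by simpa using hc.1) hc.2 (by simp) ?_
  intro x hx w hw
  simp only [Finset.mem_singleton] at hx
  subst hx
  right; simpa using hw

open Classical in
lemma deg_ge {V : Type*} [Fintype V] (G : SimpleGraph V) (k : ℕ) (hk : 1 ≤ k)
    (hn : 2 * k + 2 ≤ Fintype.card V)
    (hcut : ¬ ∃ S : Set V, G.IsCutset S ∧ G.DegenSet k S) (v : V) :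
    k + 2 ≤ G.degree v := by
  by_cases hv : G.degree v + 1 < Fintype.card V
  · obtain ⟨F, hF, hne, h⟩ := nbr_core G k hcut v hv
    have h1 := card_F G k F hne h
    have h2 := Finset.card_le_card hF
    rw [G.card_neighborFinset_eq_degree] at h2
    omega
  · omega

open Classical in
/-- A vertex of low degree has many neighbours of high degree. -/
lemma many_high {V : Type*} [Fintype V] (G : SimpleGraph V) (k : ℕ)
    (hn : 2 * k + 2 ≤ Fintype.card V)
    (hcut : ¬ ∃ S : Set V, G.IsCutset S ∧ G.DegenSet k S)
    (q : ℝ) (hq : 16 ≤ q) (hqk : q ^ 2 = k) (v : V)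
    (hv : (G.degree v : ℝ) ≤ k + q / 4) :
    (k : ℝ) / 2 ≤
      ((G.neighborFinset v).filter (fun w => (k : ℝ) + q / 4 < G.degree w)).card := by
  by_contra! hlt
  have hkq : 16 * q ≤ k := by nlinarith
  have hdv : G.degree v + 1 < Fintype.card V := by
    have : (G.degree v : ℝ) + 1 < 2 * k + 2 := by linarith
    have : G.degree v + 1 < 2 * k + 2 := by exact_mod_cast this
    omega
  obtain ⟨H, hH, hne, hmin⟩ := nbr_core G k hcut v hdv
  have hHc := card_F G k H hne hmin
  have hvH : v ∉ H := fun h => by simpa using hH h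
  set K := insert v H with hK
  have hKc : K.card = H.card + 1 := Finset.card_insert_of_notMem hvH
  have hHd : H.card ≤ G.degree v := by
    have h2 := Finset.card_le_card hH
    rwa [G.card_neighborFinset_eq_degree] at h2
  -- degree inside K
  have hKmin : ∀ w ∈ K, k + 2 ≤ (K.filter (fun x => G.Adj w x)).card := by
    intro w hw
    rw [hK, Finset.mem_insert] at hw
    rcases hw with rfl | hw
    · refine le_trans hHc (Finset.card_le_card ?_)
      intro x hx
      have := hH hx
      simp only [SimpleGraph.mem_neighborFinset] at this
      simp [hK, hx, this]
    · have h1 := hmin w hw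
      have h2 : insert v (H.filter (fun x => G.Adj w x)) ⊆ K.filter (fun x => G.Adj w x) := by
        intro x hx
        have h3 := hH hw
        simp only [SimpleGraph.mem_neighborFinset] at h3
        simp only [Finset.mem_insert, Finset.mem_filter] at hx
        rcases hx with rfl | hx
        · simp [hK, h3.symm]
        · simp [hK, hx]
      have h4 := Finset.card_le_card h2
      rw [Finset.card_insert_of_notMem (by simp [hvH])] at h4
      omega
  -- neighbours outside K
  have hout : ∀ w ∈ K, (G.degree w : ℝ) ≤ k + q / 4 →
      ((G.neighborFinset w \ K).card : ℝ) ≤ q / 4 - 2 := by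
    intro w hw hd
    have h1 : K.filter (fun x => G.Adj w x) = G.neighborFinset w ∩ K := by
      ext x; simp [and_comm]
    have h2 := Finset.card_sdiff_add_card_inter (G.neighborFinset w) K
    have h3 := hKmin w hw
    rw [h1] at h3
    rw [G.card_neighborFinset_eq_degree] at h2
    have h4 : (G.neighborFinset w \ K).card + (k + 2) ≤ G.degree w := by omega
    have h5 : ((G.neighborFinset w \ K).card : ℝ) + (k + 2) ≤ G.degree w := by exact_mod_cast h4
    linarith
  set Hi := K.filter (fun w => (k : ℝ) + q / 4 < G.degree w) with hHi
  set Lo := K.filter (fun w => ¬ ((k : ℝ) + q / 4 < G.degree w)) with hLo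
  have hsplit : Hi.card + Lo.card = K.card := Finset.card_filter_add_card_filter_not _
  have hHic : (Hi.card : ℝ) < k / 2 := by
    refine lt_of_le_of_lt ?_ hlt
    have : Hi ⊆ (G.neighborFinset v).filter (fun w => (k : ℝ) + q / 4 < G.degree w) := by
      intro x hx
      simp only [hHi, hK, Finset.mem_filter, Finset.mem_insert] at hx
      rcases hx.1 with rfl | h
      · linarith [hx.2]
      · exact Finset.mem_filter.2 ⟨hH h, hx.2⟩
    exact_mod_cast Finset.card_le_card this
  -- choose A
  obtain ⟨x, hx1, hx2⟩ : ∃ x : ℕ, 3 * q / 4 ≤ x ∧ (x : ℝ) ≤ 3 * q / 4 + 1 :=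
    ⟨⌈3 * q / 4⌉₊, Nat.le_ceil _, (Nat.ceil_lt_add_one (by linarith)).le⟩
  have hKr : (k : ℝ) + 3 ≤ K.card := by
    have : k + 3 ≤ K.card := by omega
    exact_mod_cast this
  have hKr2 : (K.card : ℝ) ≤ k + q / 4 + 1 := by
    have : K.card ≤ G.degree v + 1 := by omega
    have : (K.card : ℝ) ≤ G.degree v + 1 := by exact_mod_cast this
    linarith
  have hsplitr : (Hi.card : ℝ) + Lo.card = K.card := by exact_mod_cast hsplit
  have hxLo : x ≤ Lo.card := by
    have : (x : ℝ) ≤ Lo.card := by linarith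
    exact_mod_cast this
  obtain ⟨A, hALo, hAx⟩ := Finset.exists_subset_card_eq hxLo
  have hLoK : Lo ⊆ K := Finset.filter_subset _ _
  set O := A.biUnion (fun w => G.neighborFinset w \ K) with hO
  have hOK : ∀ w ∈ O, w ∉ K := by
    intro w hw
    simp only [hO, Finset.mem_biUnion, Finset.mem_sdiff] at hw
    obtain ⟨_, _, h⟩ := hw
    exact h.2
  have hOc : (O.card : ℝ) ≤ 3 * k / 16 := by
    have h1 : (O.card : ℝ) ≤ ∑ w ∈ A, ((G.neighborFinset w \ K).card : ℝ) := by
      exact_mod_cast Finset.card_biUnion_le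
    have h2 : ∑ w ∈ A, ((G.neighborFinset w \ K).card : ℝ) ≤ ∑ w ∈ A, (q / 4 - 2) := by
      apply Finset.sum_le_sum
      intro w hw
      have := hALo hw
      rw [hLo, Finset.mem_filter] at this
      exact hout w this.1 (not_lt.1 this.2)
    rw [Finset.sum_const, hAx, nsmul_eq_mul] at h2
    have h3 : (x : ℝ) * (q / 4 - 2) ≤ (3 * q / 4 + 1) * (q / 4 - 2) :=
      mul_le_mul_of_nonneg_right hx2 (by linarith)
    nlinarith
  obtain ⟨c, hc⟩ : ∃ c, c ∉ K ∪ O := by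
    by_contra! h
    have h1 : K ∪ O = Finset.univ := by ext; simp [h]
    have h2 := Finset.card_union_le K O
    rw [h1, Finset.card_univ] at h2
    have h3 : 2 * k + 2 ≤ K.card + O.card := by omega
    have h4 : (2 * k + 2 : ℝ) ≤ K.card + O.card := by exact_mod_cast h3
    linarith
  simp only [Finset.mem_union, not_or] at hc
  obtain ⟨a, haA⟩ : A.Nonempty := by
    rw [← Finset.card_pos, hAx]
    have : (0 : ℝ) < x := by linarith
    exact_mod_cast this
  have haK : a ∈ K := hLoK (hALo haA)
  obtain ⟨F, hFS, hFne, hF⟩ := cut_core G k hcut A ((K \ A) ∪ O) a c haA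
    (fun h => hc.1 (hLoK (hALo h)))
    (by simp [hc.1, hc.2])
    (by
      simp only [Finset.mem_union, Finset.mem_sdiff, not_or]
      exact ⟨fun h => h.2 haA, fun h => hOK a h haK⟩)
    (by
      intro y hy w hw
      by_cases hwA : w ∈ A
      · exact Or.inl hwA
      right
      by_cases hwK : w ∈ K
      · simp [hwK, hwA]
      · apply Finset.mem_union_right
        simp only [hO, Finset.mem_biUnion, Finset.mem_sdiff]
        exact ⟨y, hy, by simpa using hw, hwK⟩)
  have hFc := card_F G k F hFne hF
  set U := F \ K with hU
  have hUO : U ⊆ O := by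
    intro w hw
    rw [hU, Finset.mem_sdiff] at hw
    have := hFS hw.1
    simp only [Finset.mem_union, Finset.mem_sdiff] at this
    tauto
  have hFK : F ∩ K ⊆ K \ A := by
    intro w hw
    rw [Finset.mem_inter] at hw
    have := hFS hw.1
    rw [Finset.mem_union] at this
    rcases this with h | h
    · exact h
    · exact absurd hw.2 (hOK w h)
  have hUc : (x : ℝ) - q / 4 + 1 ≤ U.card := by
    have h1 : U.card + (F ∩ K).card = F.card := Finset.card_sdiff_add_card_inter F K
    have h2 := Finset.card_le_card hFK
    rw [Finset.card_sdiff_of_subset (hALo.trans hLoK), hAx] at h2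
    have h3 := Finset.card_le_card hLoK
    have h4 : k + 2 + x ≤ U.card + K.card := by omega
    have h5 : (k : ℝ) + 2 + x ≤ U.card + K.card := by exact_mod_cast h4
    linarith
  set L := Lo \ A with hL
  have hLc : (L.card : ℝ) = Lo.card - x := by
    rw [hL, Finset.card_sdiff_of_subset hALo, hAx, Nat.cast_sub hxLo]
  -- double counting between U and L
  have hlow : ∀ u ∈ U, (k : ℝ) + 1 - O.card - Hi.card ≤
      ((L.filter (fun l => G.Adj u l)).card : ℝ) := by
    intro u hu
    have huF : u ∈ F := (Finset.mem_sdiff.1 hu).1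
    have h1 := hF u huF
    have h2 : F.filter (fun w => G.Adj u w) ⊆ (O ∪ Hi) ∪ L.filter (fun l => G.Adj u l) := by
      intro w hw
      rw [Finset.mem_filter] at hw
      have h3 := hFS hw.1
      simp only [Finset.mem_union, Finset.mem_sdiff] at h3
      simp only [Finset.mem_union, Finset.mem_filter, hL, hLo, hHi, Finset.mem_sdiff]
      tauto
    have h3 := Finset.card_le_card h2
    have h4 := Finset.card_union_le (O ∪ Hi) (L.filter (fun l => G.Adj u l))
    have h5 := Finset.card_union_le O Hi
    have h6 : k + 1 ≤ O.card + Hi.card + (L.filter (fun l => G.Adj u l)).card := by omega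
    have h7 : (k : ℝ) + 1 ≤ O.card + Hi.card + (L.filter (fun l => G.Adj u l)).card := by
      exact_mod_cast h6
    linarith
  have hup : ∀ l ∈ L, ((U.filter (fun u => G.Adj u l)).card : ℝ) ≤ q / 4 - 2 := by
    intro l hl
    have h1 := (Finset.mem_sdiff.1 hl).1
    rw [hLo, Finset.mem_filter] at h1
    refine le_trans ?_ (hout l h1.1 (not_lt.1 h1.2))
    have : U.filter (fun u => G.Adj u l) ⊆ G.neighborFinset l \ K := by
      intro u hu
      simp only [hU, Finset.mem_filter, Finset.mem_sdiff] at hu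
      simp [hu.1.2, hu.2.symm]
    exact_mod_cast Finset.card_le_card this
  have hdc : ∑ u ∈ U, ((L.filter (fun l => G.Adj u l)).card : ℝ)
      = ∑ l ∈ L, ((U.filter (fun u => G.Adj u l)).card : ℝ) := by
    exact_mod_cast Finset.sum_card_bipartiteAbove_eq_sum_card_bipartiteBelow
      (s := U) (t := L) (fun u l => G.Adj u l)
  have hs1 := Finset.sum_le_sum hlow
  have hs2 := Finset.sum_le_sum hup
  rw [Finset.sum_const, nsmul_eq_mul] at hs1 hs2
  have hfin : (U.card : ℝ) * (k + 1 - O.card - Hi.card) ≤ L.card * (q / 4 - 2) := by linarith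
  set h : ℝ := (Hi.card : ℝ)
  have e1 : (q / 2 : ℝ) * (13 * k / 16 - h) ≤ U.card * (k + 1 - O.card - h) := by
    apply mul_le_mul <;> linarith
  have e2 : (L.card : ℝ) * (q / 4 - 2) ≤ (k - h) * (q / 4) := by
    apply mul_le_mul <;> linarith
  have e3 : (q / 2 : ℝ) * (13 * k / 16 - h) ≤ (k - h) * (q / 4) := by linarith
  have e4 : 0 < q * ((k : ℝ) / 2 - h) := mul_pos (by linarith) (by linarith)
  nlinarith

open Classical in
lemma charge {V : Type*} [Fintype V] (G : SimpleGraph V)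
    (k q s : ℝ) (hq : 16 ≤ q) (hqk : q ^ 2 = k) (hs : s = 13 * q / 190 - 1 / 38)
    (hd : ∀ v, k + 2 ≤ (G.degree v : ℝ))
    (hh : ∀ v, (G.degree v : ℝ) ≤ k + q / 4 → k / 2 ≤
      ((G.neighborFinset v).filter (fun w => k + q / 4 < G.degree w)).card) :
    0 ≤ ∑ v, ((G.degree v : ℝ) - (k + s)) := by
  have hkq : 16 * q ≤ k := by nlinarith
  set c : ℝ := (q / 4 - s) / (k + q / 4) with hc
  have hpos : 0 < k + q / 4 := by linarith
  have hc0 : 0 ≤ c := div_nonneg (by linarith) hpos.le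
  have hc1 : c ≤ 1 := by rw [hc, div_le_one hpos]; linarith
  have hcm : c * (k + q / 4) = q / 4 - s := div_mul_cancel₀ _ hpos.ne'
  have hck : s ≤ c * (k / 2) := by
    have : c * (k / 2) = (c * (k + q / 4)) / 2 - c * q / 8 := by ring
    have h2 : c * q ≤ 1 / 4 := by
      rw [hc, div_mul_eq_mul_div, div_le_iff₀ hpos]; nlinarith
    rw [this, hcm]; linarith
  set Hi := (Finset.univ : Finset V).filter (fun w => k + q / 4 < G.degree w) with hHi
  set Lo := (Finset.univ : Finset V).filter (fun w => ¬ (k + q / 4 < G.degree w)) with hLo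
  rw [← Finset.sum_filter_add_sum_filter_not Finset.univ
    (fun w => k + q / 4 < (G.degree w : ℝ))]
  have h1 : ∑ v ∈ Hi, c * ((Lo.filter (fun w => G.Adj v w)).card : ℝ) ≤
      ∑ v ∈ Hi, ((G.degree v : ℝ) - (k + s)) := by
    apply Finset.sum_le_sum
    intro v hv
    have hv' : k + q / 4 < G.degree v := (Finset.mem_filter.1 hv).2
    have hle : ((Lo.filter (fun w => G.Adj v w)).card : ℝ) ≤ G.degree v := by
      rw [← G.card_neighborFinset_eq_degree]
      have : Lo.filter (fun w => G.Adj v w) ⊆ G.neighborFinset v := by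
        intro w hw
        simpa using (Finset.mem_filter.1 hw).2
      exact_mod_cast Finset.card_le_card this
    have := mul_le_mul_of_nonneg_left hle hc0
    nlinarith
  have h2 : ∑ w ∈ Lo, (-(c * ((Hi.filter (fun v => G.Adj v w)).card : ℝ))) ≤
      ∑ v ∈ Lo, ((G.degree v : ℝ) - (k + s)) := by
    apply Finset.sum_le_sum
    intro v hv
    have hv' := not_lt.1 (Finset.mem_filter.1 hv).2
    have h3 := hh v hv'
    have h4 : (G.neighborFinset v).filter (fun w => k + q / 4 < G.degree w) =
        Hi.filter (fun w => G.Adj w v) := by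
      ext w
      simp [hHi, and_comm, G.adj_comm]
    rw [h4] at h3
    have := mul_le_mul_of_nonneg_left h3 hc0
    linarith [hd v]
  have hdc : ∑ u ∈ Hi, ((Lo.filter (fun l => G.Adj u l)).card : ℝ)
      = ∑ l ∈ Lo, ((Hi.filter (fun u => G.Adj u l)).card : ℝ) := by
    exact_mod_cast Finset.sum_card_bipartiteAbove_eq_sum_card_bipartiteBelow
      (s := Hi) (t := Lo) (fun u l => G.Adj u l)
  rw [Finset.sum_neg_distrib, ← Finset.mul_sum, ← hdc] at h2
  rw [← Finset.mul_sum] at h1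
  linarith

theorem stmt0 {V : Type*} [Fintype V] (G : SimpleGraph V) [DecidableRel G.Adj]
    (k : ℕ) (hk : 1 ≤ k) (hn : 2 * k + 2 ≤ Fintype.card V)
    (hcut : ¬ ∃ S : Set V, G.IsCutset S ∧ G.DegenSet k S) :
    (1 / 2 : ℝ) * ((k : ℝ) + 13 * Real.sqrt k / 190 - 1 / 38) * (Fintype.card V : ℝ)
      ≤ (G.edgeFinset.card : ℝ) := by
  classical
  have hd : ∀ v, (k : ℝ) + 2 ≤ (G.degree v : ℝ) := by
    intro v
    have h := deg_ge G k hk hn hcut v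
    have h' : k + 2 ≤ G.degree v := by convert h
    exact_mod_cast h'
  have hsq : (Real.sqrt k) ^ 2 = (k : ℝ) := Real.sq_sqrt (by positivity)
  set q := Real.sqrt k with hqd
  have main : 0 ≤ ∑ v, ((G.degree v : ℝ) - (k + (13 * q / 190 - 1 / 38))) := by
    by_cases hq : 16 ≤ q
    · have := charge G k q _ hq hsq rfl (by intro v; convert hd v)
        (fun v hv => many_high G k hn hcut q hq hsq v hv)
      convert this
    · apply Finset.sum_nonneg
      intro v _
      have := hd v
      push Not at hq
      linarith
  have hsum : ∑ v, (G.degree v : ℝ) = 2 * (G.edgeFinset.card : ℝ) := by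
    exact_mod_cast G.sum_degrees_eq_twice_card_edges
  rw [Finset.sum_sub_distrib, hsum, Finset.sum_const, Finset.card_univ, nsmul_eq_mul] at main
  linarith
end

section
/- If G is a finite simple graph of order n at least 5 that has no 2-degenerate cut, then the number of edges of G is at least (27n − 35)/10. -/
namespace CutAux

universe u

/-- `A` and `B` are the two sides of a separation with separator `S`. -/
structure Sep {V : Type*} (G : SimpleGraph V) (S A B : Set V) : Prop where
  neA : A.Nonempty
  neB : B.Nonempty
  cov : ∀ v, v ∈ S ∨ v ∈ A ∨ v ∈ B
  dA : ∀ v ∈ A, v ∉ S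
  dB : ∀ v ∈ B, v ∉ S
  dAB : ∀ v ∈ A, v ∉ B
  nadj : ∀ a ∈ A, ∀ b ∈ B, ¬ G.Adj a b

theorem Sep.symm {V : Type*} {G : SimpleGraph V} {S A B : Set V} (h : Sep G S A B) :
    Sep G S B A :=
  ⟨h.neB, h.neA, fun v => by have := h.cov v; tauto, h.dB, h.dA,
    fun v hv hv' => h.dAB v hv' hv, fun a ha b hb hab => h.nadj b hb a ha hab.symm⟩

theorem Sep.cut {V : Type*} {G : SimpleGraph V} {S A B : Set V} (h : Sep G S A B) :
    G.IsCutset S := by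
  intro hp
  obtain ⟨a, ha⟩ := h.neA
  obtain ⟨b, hb⟩ := h.neB
  have key : ∀ p q : (Sᶜ : Set V), (G.induce Sᶜ).Reachable p q → (p : V) ∈ A → (q : V) ∈ A := by
    intro p q ⟨w⟩
    induction w with
    | nil => exact id
    | @cons p' q' r' hadj _ ih =>
      intro hpA
      apply ih
      rcases h.cov q' with h1 | h1 | h1
      · exact absurd h1 q'.2
      · exact h1
      · exact absurd hadj (h.nadj _ hpA _ h1)
  exact h.dAB b (key ⟨a, h.dA a ha⟩ ⟨b, h.dB b hb⟩ (hp _ _) ha) hb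

theorem exists_sep {V : Type*} {G : SimpleGraph V} {S : Set V} (h : G.IsCutset S) :
    ∃ A B, Sep G S A B := by
  unfold SimpleGraph.IsCutset SimpleGraph.Preconnected at h
  push Not at h
  obtain ⟨a, b, hab⟩ := h
  refine ⟨{c | ∃ hc : c ∈ Sᶜ, (G.induce Sᶜ).Reachable a ⟨c, hc⟩},
    {c | ∃ hc : c ∈ Sᶜ, ¬ (G.induce Sᶜ).Reachable a ⟨c, hc⟩}, ⟨⟨a, a.2, ?_⟩, ⟨b, b.2, hab⟩, ?_, ?_, ?_, ?_, ?_⟩⟩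
  · exact SimpleGraph.Reachable.refl _
  · intro v
    by_cases hv : v ∈ S
    · exact Or.inl hv
    · right
      by_cases hr : (G.induce Sᶜ).Reachable a ⟨v, hv⟩
      · exact Or.inl ⟨hv, hr⟩
      · exact Or.inr ⟨hv, hr⟩
  · rintro v ⟨hv, _⟩; exact hv
  · rintro v ⟨hv, _⟩; exact hv
  · rintro v ⟨hv, h1⟩ ⟨_, h2⟩; exact h2 h1
  · rintro p ⟨hp, h1⟩ q ⟨hq, h2⟩ hpq
    apply h2
    refine h1.trans (SimpleGraph.Adj.reachable ?_)
    exact hpq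

theorem degen_of_card_le {V : Type*} [Fintype V] (G : SimpleGraph V) (T : Set V)
    (hT : T.ncard ≤ 3) (hne : T.Nonempty) : ∃ v ∈ T, {w ∈ T | G.Adj v w}.ncard ≤ 2 := by
  obtain ⟨v, hv⟩ := hne
  refine ⟨v, hv, ?_⟩
  have : {w ∈ T | G.Adj v w}.ncard < T.ncard := by
    apply Set.ncard_lt_ncard _ (Set.toFinite _)
    refine ⟨fun w hw => hw.1, fun h => ?_⟩
    exact G.loopless.irrefl v (h hv).2
  omega

/-- Completion of the neighbourhood of `u`: the missing edges. -/
def miss {V : Type*} (G : SimpleGraph V) (u : V) : SimpleGraph V where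
  Adj a b := G.Adj u a ∧ G.Adj u b ∧ a ≠ b ∧ ¬ G.Adj a b
  symm := ⟨fun _ _ h => ⟨h.2.1, h.1, h.2.2.1.symm, fun h' => h.2.2.2 h'.symm⟩⟩
  loopless := ⟨fun _ h => h.2.2.1 rfl⟩

def NoCut {V : Type*} (G : SimpleGraph V) : Prop :=
  ¬ ∃ S : Set V, G.IsCutset S ∧ G.DegenSet 2 S

theorem reduce_noCut {V : Type*} [Fintype V] [DecidableEq V] (G : SimpleGraph V)
    [DecidableRel G.Adj] (u : V)
    (hd : 4 ≤ G.degree u) (hG : NoCut G) :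
    NoCut ((G ⊔ miss G u).induce ({u}ᶜ : Set V)) := by
  rintro ⟨S, hS, hdeg⟩
  obtain ⟨A, B, hs⟩ := exists_sep hS
  -- some neighbour is outside of S
  have hw : ∃ w : ({u}ᶜ : Set V), G.Adj u w ∧ w ∉ S := by
    by_contra hcon
    push Not at hcon
    have hne : ({w : ({u}ᶜ : Set V) | G.Adj u w}).Nonempty := by
      have : (G.neighborFinset u).Nonempty := by
        rw [← Finset.card_pos, G.card_neighborFinset_eq_degree]; omega
      obtain ⟨w, hw⟩ := this
      rw [SimpleGraph.mem_neighborFinset] at hw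
      exact ⟨⟨w, hw.ne'⟩, hw⟩
    obtain ⟨v, hv, hc⟩ := hdeg {w | G.Adj u w} (fun w hw => hcon w hw) hne
    have h1 : ((G.neighborFinset u).erase (v : V)).card = G.degree u - 1 := by
      rw [Finset.card_erase_of_mem (by simpa using hv), G.card_neighborFinset_eq_degree]
    have h2 : Subtype.val '' {w : ({u}ᶜ : Set V) | w ∈ {w : ({u}ᶜ : Set V) | G.Adj u w} ∧
        ((G ⊔ miss G u).induce ({u}ᶜ : Set V)).Adj v w} = ((G.neighborFinset u).erase (v : V) : Finset V) := by
      ext w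
      constructor
      · rintro ⟨w, ⟨hw1, hw2⟩, rfl⟩
        simp only [Finset.coe_erase, Set.mem_sdiff, Finset.mem_coe, SimpleGraph.mem_neighborFinset,
          Set.mem_singleton_iff]
        exact ⟨hw1, fun h => hw2.ne (Subtype.ext h.symm)⟩
      · intro hw
        simp only [Finset.coe_erase, Set.mem_sdiff, Finset.mem_coe, SimpleGraph.mem_neighborFinset,
          Set.mem_singleton_iff] at hw
        refine ⟨⟨w, hw.1.ne'⟩, ⟨hw.1, ?_⟩, rfl⟩
        by_cases hvw : G.Adj v w
        · exact Or.inl hvw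
        · exact Or.inr ⟨hv, hw.1, fun h => hw.2 h.symm, hvw⟩
    have h3 := congrArg Set.ncard h2
    rw [Set.ncard_image_of_injective _ Subtype.val_injective, Set.ncard_coe_finset, h1] at h3
    have h4 := hc
    rw [h3] at h4
    omega
  obtain ⟨w, huw, hwS⟩ := hw
  -- wlog w ∈ A
  have main : ∀ A B, Sep ((G ⊔ miss G u).induce ({u}ᶜ : Set V)) S A B → w ∈ A → False := by
    intro A B hs hwA
    apply hG
    refine ⟨Subtype.val '' S, Sep.cut (A := insert u (Subtype.val '' A)) (B := Subtype.val '' B) ?_, ?_⟩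
    · refine ⟨⟨u, Or.inl rfl⟩, hs.neB.image _, ?_, ?_, ?_, ?_, ?_⟩
      · intro v
        by_cases hv : v = u
        · right; left; left; exact hv
        · rcases hs.cov ⟨v, hv⟩ with h | h | h
          · exact Or.inl ⟨_, h, rfl⟩
          · exact Or.inr (Or.inl (Or.inr ⟨_, h, rfl⟩))
          · exact Or.inr (Or.inr ⟨_, h, rfl⟩)
      · rintro v (rfl | ⟨v, hv, rfl⟩)
        · rintro ⟨s, _, hs'⟩; exact s.2 hs'
        · rintro ⟨s, h1, hs'⟩; exact hs.dA v hv (Subtype.val_injective hs' ▸ h1)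
      · rintro _ ⟨v, hv, rfl⟩ ⟨s, h1, hs'⟩; exact hs.dB v hv (Subtype.val_injective hs' ▸ h1)
      · rintro v (rfl | ⟨v, hv, rfl⟩)
        · rintro ⟨s, _, hs'⟩; exact s.2 hs'
        · rintro ⟨s, h1, hs'⟩; exact hs.dAB v hv (Subtype.val_injective hs' ▸ h1)
      · rintro a (rfl | ⟨a, ha, rfl⟩) _ ⟨b, hb, rfl⟩ hab
        · apply hs.nadj w hwA b hb
          by_cases h : G.Adj w b
          · exact Or.inl h
          · refine Or.inr ⟨huw, hab, fun h => ?_, h⟩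
            exact hs.dAB w hwA (Subtype.val_injective h ▸ hb)
        · exact hs.nadj a ha b hb (Or.inl hab)
    · intro T hT hne
      have hTu : ∀ t ∈ T, t ∈ ({u}ᶜ : Set V) := by
        intro t ht; obtain ⟨s, _, rfl⟩ := hT ht; exact s.2
      obtain ⟨v, hv, hc⟩ := hdeg {s | (s : V) ∈ T} (by
        intro s hs; obtain ⟨s', h1, h2⟩ := hT hs; exact Subtype.val_injective h2 ▸ h1) (by
        obtain ⟨t, ht⟩ := hne; exact ⟨⟨t, hTu t ht⟩, ht⟩)
      refine ⟨v, hv, le_trans ?_ hc⟩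
      rw [← Set.ncard_image_of_injective _ Subtype.val_injective]
      apply Set.ncard_le_ncard _ (Set.toFinite _)
      rintro t ⟨ht, hvt⟩
      exact ⟨⟨t, hTu t ht⟩, ⟨ht, Or.inl hvt⟩, rfl⟩
  rcases hs.cov w with h | h | h
  · exact hwS h
  · exact main A B hs h
  · exact main B A hs.symm h

theorem reduce_card {V : Type*} [Fintype V] [DecidableEq V] (G : SimpleGraph V)
    [DecidableRel G.Adj] (u : V) [DecidableRel (miss G u).Adj]
    [DecidableRel ((G ⊔ miss G u).induce ({u}ᶜ : Set V)).Adj] :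
    ((G ⊔ miss G u).induce ({u}ᶜ : Set V)).edgeFinset.card + G.degree u ≤
      G.edgeFinset.card + (miss G u).edgeFinset.card := by
  classical
  have h1 := SimpleGraph.card_edgeFinset_induce_compl_singleton (G ⊔ miss G u) u
  have h2 : (G ⊔ miss G u).degree u = G.degree u := by
    rw [← SimpleGraph.card_neighborFinset_eq_degree, ← SimpleGraph.card_neighborFinset_eq_degree]
    congr 1
    ext w
    rw [SimpleGraph.mem_neighborFinset, SimpleGraph.mem_neighborFinset, SimpleGraph.sup_adj]
    exact ⟨fun h => h.elim id (fun h => h.2.1), Or.inl⟩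
  have h3 : (G ⊔ miss G u).edgeFinset.card ≤ G.edgeFinset.card + (miss G u).edgeFinset.card := by
    rw [SimpleGraph.edgeFinset_sup]
    exact Finset.card_union_le _ _
  have h4 : (G ⊔ miss G u).degree u ≤ (G ⊔ miss G u).edgeFinset.card := by
    rw [← SimpleGraph.card_incidenceFinset_eq_degree]
    exact Finset.card_le_card (SimpleGraph.incidenceFinset_subset _ _)
  have h5 : ((G ⊔ miss G u).induce ({u}ᶜ : Set V)).edgeFinset.card =
    (G ⊔ miss G u).edgeFinset.card - (G ⊔ miss G u).degree u := by
    have h6 := h1.trans (SimpleGraph.card_edgeFinset_deleteIncidenceSet (G ⊔ miss G u) u)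
    convert h6 using 2 <;> congr!
  omega

theorem nbhd_dense {V : Type*} [Fintype V] [DecidableEq V] (G : SimpleGraph V)
    [DecidableRel G.Adj] (hG : NoCut G) (u : V) (hu : G.degree u + 1 < Fintype.card V) :
    ∃ T ⊆ G.neighborFinset u, T.Nonempty ∧
      ∀ v ∈ T, 3 ≤ (T.filter (fun w => G.Adj v w)).card := by
  by_contra hcon
  push Not at hcon
  apply hG
  refine ⟨G.neighborSet u, Sep.cut (A := {u}) (B := {v | v ≠ u ∧ ¬ G.Adj u v}) ?_, ?_⟩
  · refine ⟨⟨u, rfl⟩, ?_, ?_, ?_, ?_, ?_, ?_⟩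
    · by_contra hne
      have : (Finset.univ : Finset V) ⊆ insert u (G.neighborFinset u) := by
        intro v _
        by_contra hv
        apply hne
        refine ⟨v, ?_⟩
        simpa using hv
      have h1 := Finset.card_le_card this
      have h2 := Finset.card_insert_le u (G.neighborFinset u)
      rw [G.card_neighborFinset_eq_degree] at h2
      rw [Finset.card_univ] at h1
      omega
    · intro v
      simp only [SimpleGraph.mem_neighborSet, Set.mem_singleton_iff, Set.mem_ofPred_eq]
      tauto
    · rintro v rfl; simp
    · rintro v ⟨_, h⟩; exact h
    · rintro v rfl h; exact h.1 rfl
    · rintro v rfl b h; exact h.2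
  · intro T hT hne
    obtain ⟨v, hv, hc⟩ := hcon T.toFinite.toFinset (by
      intro t ht; have := hT (by simpa using ht); simpa using this) (by simpa using hne)
    refine ⟨v, by simpa using hv, ?_⟩
    have : {w ∈ T | G.Adj v w} = ((T.toFinite.toFinset.filter (fun w => G.Adj v w) : Finset V) : Set V) := by
      ext w; simp
    rw [this, Set.ncard_coe_finset]
    omega


theorem miss_bound {V : Type*} [Fintype V] [DecidableEq V] (G : SimpleGraph V)
    [DecidableRel G.Adj] (u : V) (x : V) (hx : G.Adj u x)
    (hcl : ∀ a b, G.Adj u a → G.Adj u b → a ≠ x → b ≠ x → a ≠ b → G.Adj a b)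
    [DecidableRel (miss G u).Adj] :
    (miss G u).edgeFinset.card + 1 + ((G.neighborFinset u).filter (fun w => G.Adj x w)).card
      ≤ G.degree u := by
  have h1 : (miss G u).edgeFinset ⊆ (miss G u).incidenceFinset x := by
    intro e
    induction e with
    | _ a b =>
      intro he
      rw [SimpleGraph.mem_edgeFinset, SimpleGraph.mem_edgeSet] at he
      rw [SimpleGraph.mem_incidenceFinset, SimpleGraph.mk'_mem_incidenceSet_iff]
      refine ⟨he, ?_⟩
      by_contra hcon
      push Not at hcon
      exact he.2.2.2 (hcl a b he.1 he.2.1 hcon.1.symm hcon.2.symm he.2.2.1)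
  have h2 := Finset.card_le_card h1
  rw [SimpleGraph.card_incidenceFinset_eq_degree, ← SimpleGraph.card_neighborFinset_eq_degree] at h2
  have h3 : insert x ((miss G u).neighborFinset x ∪ (G.neighborFinset u).filter (fun w => G.Adj x w))
      ⊆ G.neighborFinset u := by
    intro w hw
    simp only [Finset.mem_insert, Finset.mem_union, Finset.mem_filter,
      SimpleGraph.mem_neighborFinset] at hw ⊢
    rcases hw with rfl | hw | hw
    · exact hx
    · exact hw.2.1
    · exact hw.1
  have h4 := Finset.card_le_card h3
  rw [Finset.card_insert_of_notMem, Finset.card_union_of_disjoint,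
    G.card_neighborFinset_eq_degree] at h4
  · omega
  · rw [Finset.disjoint_left]
    intro w hw hw'
    simp only [Finset.mem_filter, SimpleGraph.mem_neighborFinset] at hw hw'
    exact hw.2.2.2 hw'.2
  · simp

/-- Reducibility: a vertex of degree at least four whose deletion plus completion loses three edges
does not exist. -/
def Irred {V : Type*} [Fintype V] (G : SimpleGraph V) : Prop :=
  ∀ [DecidableEq V] [DecidableRel G.Adj] (u : V) [DecidableRel (miss G u).Adj],
    4 ≤ G.degree u → G.degree u < (miss G u).edgeFinset.card + 3

theorem five_le {V : Type*} [Fintype V] [DecidableEq V] (G : SimpleGraph V)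
    [DecidableRel G.Adj] (hG : NoCut G) (hI : Irred G) (hn : 6 ≤ Fintype.card V) (u : V) :
    5 ≤ G.degree u := by
  classical
  by_contra hlt
  obtain ⟨T, hT, ⟨v, hv⟩, h3⟩ := nbhd_dense G hG u (by omega)
  have hTc := Finset.card_le_card hT
  rw [G.card_neighborFinset_eq_degree] at hTc
  have key : ∀ v ∈ T, (T.filter (fun w => G.Adj v w)) ⊆ T.erase v := by
    intro v _ w hw
    rw [Finset.mem_filter] at hw
    exact Finset.mem_erase.2 ⟨hw.2.ne', hw.1⟩
  have h4 := Finset.card_le_card (key v hv)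
  have h5 := h3 v hv
  rw [Finset.card_erase_of_mem hv] at h4
  have hTe : T = G.neighborFinset u := by
    apply Finset.eq_of_subset_of_card_le hT
    rw [G.card_neighborFinset_eq_degree]; omega
  have hcl : ∀ a b, G.Adj u a → G.Adj u b → a ≠ b → G.Adj a b := by
    intro a b ha hb hab
    have haT : a ∈ T := by rw [hTe]; simpa using ha
    have hbT : b ∈ T := by rw [hTe]; simpa using hb
    have h6 : (T.filter (fun w => G.Adj a w)) = T.erase a := by
      apply Finset.eq_of_subset_of_card_le (key a haT)
      rw [Finset.card_erase_of_mem haT]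
      have := h3 a haT
      omega
    have h7 : b ∈ T.erase a := Finset.mem_erase.2 ⟨hab.symm, hbT⟩
    rw [← h6, Finset.mem_filter] at h7
    exact h7.2
  have hm := miss_bound G u v (by simpa using hT hv) (fun a b ha hb _ _ => hcl a b ha hb)
  have hi := hI u (by omega)
  have h8 : 3 ≤ ((G.neighborFinset u).filter (fun w => G.Adj v w)).card := by
    rw [← hTe]; exact h5
  omega

theorem struct5 {V : Type*} [Fintype V] [DecidableEq V] (G : SimpleGraph V)
    [DecidableRel G.Adj] (hG : NoCut G) (hI : Irred G) (hn : 7 ≤ Fintype.card V) (u : V)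
    (hu : G.degree u = 5) :
    ∃ x, G.Adj u x ∧ ∀ a b, G.Adj u a → G.Adj u b → a ≠ x → b ≠ x → a ≠ b → G.Adj a b := by
  classical
  obtain ⟨T, hT, ⟨v, hv⟩, h3⟩ := nbhd_dense G hG u (by omega)
  have hTc := Finset.card_le_card hT
  rw [G.card_neighborFinset_eq_degree] at hTc
  have key : ∀ v ∈ T, (T.filter (fun w => G.Adj v w)) ⊆ T.erase v := by
    intro v _ w hw
    rw [Finset.mem_filter] at hw
    exact Finset.mem_erase.2 ⟨hw.2.ne', hw.1⟩
  have h4 := Finset.card_le_card (key v hv)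
  have h5 := h3 v hv
  rw [Finset.card_erase_of_mem hv] at h4
  by_cases hT4 : T.card = 4
  · have h6 : (G.neighborFinset u \ T).card = 1 := by
      rw [Finset.card_sdiff_of_subset hT, G.card_neighborFinset_eq_degree]; omega
    obtain ⟨x, hx⟩ := Finset.card_eq_one.1 h6
    have hx1 : x ∈ G.neighborFinset u \ T := by rw [hx]; simp
    have hmem : ∀ a, G.Adj u a → a ≠ x → a ∈ T := by
      intro a ha hax
      by_contra haT
      have : a ∈ G.neighborFinset u \ T := by
        rw [Finset.mem_sdiff]; exact ⟨by simpa using ha, haT⟩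
      rw [hx, Finset.mem_singleton] at this
      exact hax this
    refine ⟨x, by simpa using (Finset.mem_sdiff.1 hx1).1, ?_⟩
    intro a b ha hb hax hbx hab
    have haT := hmem a ha hax
    have hbT := hmem b hb hbx
    have h6 : (T.filter (fun w => G.Adj a w)) = T.erase a := by
      apply Finset.eq_of_subset_of_card_le (key a haT)
      rw [Finset.card_erase_of_mem haT]
      have := h3 a haT
      omega
    have h7 : b ∈ T.erase a := Finset.mem_erase.2 ⟨hab.symm, hbT⟩
    rw [← h6, Finset.mem_filter] at h7
    exact h7.2
  · exfalso
    have hTe : T = G.neighborFinset u := by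
      apply Finset.eq_of_subset_of_card_le hT
      rw [G.card_neighborFinset_eq_degree]; omega
    have hT5 : T.card = 5 := by omega
    have hdeg : ∀ a, (miss G u).degree a ≤ if a ∈ T then 1 else 0 := by
      intro a
      rw [← SimpleGraph.card_neighborFinset_eq_degree]
      split_ifs with ha
      · have h6 : (miss G u).neighborFinset a ⊆ (T.erase a) \ (T.filter (fun w => G.Adj a w)) := by
          intro w hw
          rw [SimpleGraph.mem_neighborFinset] at hw
          rw [Finset.mem_sdiff, Finset.mem_erase, Finset.mem_filter]
          refine ⟨⟨hw.2.2.1.symm, ?_⟩, fun h => hw.2.2.2 h.2⟩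
          rw [hTe]; simpa using hw.2.1
        have h7 := Finset.card_le_card h6
        rw [Finset.card_sdiff_of_subset (key a ha), Finset.card_erase_of_mem ha] at h7
        have := h3 a ha
        omega
      · rw [Nat.le_zero, Finset.card_eq_zero, Finset.eq_empty_iff_forall_notMem]
        intro w hw
        rw [SimpleGraph.mem_neighborFinset] at hw
        apply ha
        rw [hTe]; simpa using hw.1
    have hsum := (miss G u).sum_degrees_eq_twice_card_edges
    have hle : ∑ a, (miss G u).degree a ≤ ∑ a, if a ∈ T then 1 else 0 :=
      Finset.sum_le_sum (fun a _ => hdeg a)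
    rw [Finset.sum_ite_mem, Finset.univ_inter, Finset.sum_const, smul_eq_mul, hT5] at hle
    have := hI u (by omega)
    omega

theorem few {V : Type*} [Fintype V] [DecidableEq V] (G : SimpleGraph V)
    [DecidableRel G.Adj] (hI : Irred G) (u : V) (hu : G.degree u = 5) (x : V) (hx : G.Adj u x)
    (hcl : ∀ a b, G.Adj u a → G.Adj u b → a ≠ x → b ≠ x → a ≠ b → G.Adj a b) :
    ((G.neighborFinset u).filter (fun w => G.Adj x w)).card ≤ 1 := by
  classical
  have := miss_bound G u x hx hcl
  have := hI u (by omega)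
  omega

theorem six_le {V : Type*} [Fintype V] [DecidableEq V] (G : SimpleGraph V)
    [DecidableRel G.Adj] (hG : NoCut G) (hI : Irred G) (hn : 7 ≤ Fintype.card V) (u : V)
    (hu : G.degree u = 5) (x : V) (hx : G.Adj u x)
    (hcl : ∀ a b, G.Adj u a → G.Adj u b → a ≠ x → b ≠ x → a ≠ b → G.Adj a b)
    (v : V) (huv : G.Adj u v) (hvx : v ≠ x) : G.degree v ≠ 5 := by
  intro hv
  have hfx := few G hI u hu x hx hcl
  set Tv := ((G.neighborFinset u).erase x).erase v with hTv
  have hTvc : Tv.card = 3 := by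
    rw [hTv, Finset.card_erase_of_mem, Finset.card_erase_of_mem, G.card_neighborFinset_eq_degree, hu]
    · simpa using hx
    · rw [Finset.mem_erase]; exact ⟨hvx, by simpa using huv⟩
  have huT : u ∉ Tv := by simp [hTv]
  have hsub : insert u Tv ⊆ G.neighborFinset v := by
    intro w hw
    rw [Finset.mem_insert] at hw
    rw [SimpleGraph.mem_neighborFinset]
    rcases hw with rfl | hw
    · exact huv.symm
    · simp only [hTv, Finset.mem_erase, SimpleGraph.mem_neighborFinset] at hw
      exact hcl v w huv hw.2.2 hvx hw.2.1 hw.1.symm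
  have h1 : (G.neighborFinset v \ insert u Tv).card = 1 := by
    rw [Finset.card_sdiff_of_subset hsub, G.card_neighborFinset_eq_degree,
      Finset.card_insert_of_notMem huT]; omega
  obtain ⟨y, hy⟩ := Finset.card_eq_one.1 h1
  have hy1 : y ∈ G.neighborFinset v \ insert u Tv := by rw [hy]; simp
  rw [Finset.mem_sdiff, SimpleGraph.mem_neighborFinset, Finset.mem_insert, not_or] at hy1
  obtain ⟨hvy, hyu, hyT⟩ := hy1
  have hNv : ∀ a, G.Adj v a → a ≠ y → a = u ∨ a ∈ Tv := by
    intro a ha hay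
    by_contra hcon
    have : a ∈ G.neighborFinset v \ insert u Tv := by
      rw [Finset.mem_sdiff, Finset.mem_insert]; exact ⟨by simpa using ha, hcon⟩
    rw [hy, Finset.mem_singleton] at this
    exact hay this
  have hTmem : ∀ a, a ∈ Tv ↔ a ≠ v ∧ a ≠ x ∧ G.Adj u a := by
    intro a; simp [hTv]
  have hclv : ∀ a b, G.Adj v a → G.Adj v b → a ≠ y → b ≠ y → a ≠ b → G.Adj a b := by
    intro a b ha hb hay hby hab
    rcases hNv a ha hay with rfl | h1 <;> rcases hNv b hb hby with rfl | h2
    · exact absurd rfl hab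
    · exact ((hTmem b).1 h2).2.2
    · exact ((hTmem a).1 h1).2.2.symm
    · rw [hTmem] at h1 h2
      exact hcl a b h1.2.2 h2.2.2 h1.2.1 h2.2.1 hab
  have hfy := few G hI v hv y hvy hclv
  apply hG
  refine ⟨(Tv : Set V) ∪ {x, y}, Sep.cut (A := {u, v})
    (B := {w | w ≠ u ∧ w ≠ v ∧ w ≠ x ∧ w ≠ y ∧ w ∉ Tv}) ?_, ?_⟩
  · refine ⟨⟨u, Or.inl rfl⟩, ?_, ?_, ?_, ?_, ?_, ?_⟩
    · by_contra hne
      have hx5 := five_le G hG hI (by omega) x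
      have hsubx : G.neighborFinset x ⊆
          (G.neighborFinset u).filter (fun w => G.Adj x w) ∪ {u, y} := by
        intro w hw
        rw [SimpleGraph.mem_neighborFinset] at hw
        simp only [Finset.mem_union, Finset.mem_filter, SimpleGraph.mem_neighborFinset,
          Finset.mem_insert, Finset.mem_singleton]
        by_contra hcon
        push Not at hcon
        apply hne
        refine ⟨w, hcon.2.1, ?_, hw.ne', hcon.2.2, ?_⟩
        · rintro rfl; exact hcon.1 huv hw
        · intro h; exact hcon.1 ((hTmem w).1 h).2.2 hw
      have h2 := Finset.card_le_card hsubx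
      have h3 := Finset.card_union_le ((G.neighborFinset u).filter (fun w => G.Adj x w)) {u, y}
      have h4 := Finset.card_le_two (a := u) (b := y)
      rw [G.card_neighborFinset_eq_degree] at h2
      omega
    · intro w
      simp only [Set.mem_union, Finset.mem_coe, Set.mem_insert_iff, Set.mem_singleton_iff,
        Set.mem_ofPred_eq]
      tauto
    · rintro w (rfl | rfl) (h | h | h)
      · exact huT h
      · exact hx.ne h
      · exact hyu h.symm
      · exact ((hTmem _).1 h).1 rfl
      · exact hvx h
      · exact hvy.ne h
    · rintro w ⟨_, _, h3, h4, h5⟩ (h | h | h)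
      · exact h5 h
      · exact h3 h
      · exact h4 h
    · rintro w (rfl | rfl) h
      · exact h.1 rfl
      · exact h.2.1 rfl
    · rintro w (rfl | rfl) b ⟨h1, h2, h3, h4, h5⟩ hwb
      · exact h5 ((hTmem b).2 ⟨h2, h3, hwb⟩)
      · exact (hNv b hwb h4).elim h1 h5
  · intro R hR hne
    have aux : ∀ (z t p : V), G.Adj p z →
        (∀ w ∈ R, w = z ∨ w = t ∨ G.Adj p w) →
        ((G.neighborFinset p).filter (fun w => G.Adj z w)).card ≤ 1 →
        {w ∈ R | G.Adj z w}.ncard ≤ 2 := by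
      intro z t p _ hRw hc
      have : {w ∈ R | G.Adj z w} ⊆
          ((insert t ((G.neighborFinset p).filter (fun w => G.Adj z w)) : Finset V) : Set V) := by
        rintro w ⟨hw, hzw⟩
        rw [Finset.mem_coe, Finset.mem_insert, Finset.mem_filter, SimpleGraph.mem_neighborFinset]
        rcases hRw w hw with h | h | h
        · exact absurd h hzw.ne'
        · exact Or.inl h
        · exact Or.inr ⟨h, hzw⟩
      have h2 := Set.ncard_le_ncard this (Set.toFinite _)
      rw [Set.ncard_coe_finset] at h2
      have := Finset.card_insert_le t ((G.neighborFinset p).filter (fun w => G.Adj z w))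
      omega
    by_cases hxR : x ∈ R
    · refine ⟨x, hxR, aux x y u hx ?_ hfx⟩
      intro w hw
      rcases hR hw with h | h | h
      · exact Or.inr (Or.inr ((hTmem w).1 h).2.2)
      · exact Or.inl h
      · exact Or.inr (Or.inl h)
    · by_cases hyR : y ∈ R
      · refine ⟨y, hyR, aux y x v hvy ?_ hfy⟩
        intro w hw
        rcases hR hw with h | h | h
        · have := hsub (Finset.mem_insert_of_mem h)
          exact Or.inr (Or.inr (by simpa using this))
        · exact Or.inr (Or.inl h)
        · exact Or.inl h
      · apply degen_of_card_le G R _ hne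
        have : R ⊆ (Tv : Set V) := by
          intro w hw
          rcases hR hw with h | h | h
          · exact h
          · exact absurd (h ▸ hw) hxR
          · exact absurd ((show w = y from h) ▸ hw) hyR
        have h2 := Set.ncard_le_ncard this (Set.toFinite _)
        rw [Set.ncard_coe_finset] at h2
        omega

theorem irred_bound {V : Type*} [Fintype V] [DecidableEq V] (G : SimpleGraph V)
    [DecidableRel G.Adj] (hG : NoCut G) (hI : Irred G) (hn : 7 ≤ Fintype.card V) :
    27 * Fintype.card V ≤ 10 * G.edgeFinset.card := by
  set A := Finset.univ.filter (fun v => G.degree v = 5) with hA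
  set B := Finset.univ.filter (fun v => ¬ G.degree v = 5) with hB
  have hsum := G.sum_degrees_eq_twice_card_edges
  rw [← Finset.sum_filter_add_sum_filter_not Finset.univ (fun v => G.degree v = 5)] at hsum
  have hcard : A.card + B.card = Fintype.card V := by
    rw [hA, hB, Finset.card_filter_add_card_filter_not, Finset.card_univ]
  have h1 : ∑ v ∈ A, G.degree v = 5 * A.card := by
    rw [Finset.sum_const_nat (m := 5)]
    · ring
    · intro v hv; rw [hA, Finset.mem_filter] at hv; exact hv.2
  have h2 : 6 * B.card ≤ ∑ v ∈ B, G.degree v := by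
    have := Finset.card_nsmul_le_sum B (fun v => G.degree v) 6 (by
      intro v hv
      rw [hB, Finset.mem_filter] at hv
      have := five_le G hG hI (by omega) v
      have := hv.2
      show 6 ≤ G.degree v
      omega)
    simpa [mul_comm] using this
  have h3 : 4 * A.card ≤ ∑ v ∈ B, G.degree v := by
    have e := Finset.sum_card_bipartiteAbove_eq_sum_card_bipartiteBelow (s := A) (t := B) G.Adj
    have e1 : 4 * A.card ≤ ∑ a ∈ A, (Finset.bipartiteAbove G.Adj B a).card := by
      have := Finset.card_nsmul_le_sum A (fun a => (Finset.bipartiteAbove G.Adj B a).card) 4 (by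
        intro u hu
        rw [hA, Finset.mem_filter] at hu
        have hu := hu.2
        obtain ⟨x, hx, hcl⟩ := struct5 G hG hI hn u hu
        have hsub : (G.neighborFinset u).erase x ⊆ Finset.bipartiteAbove G.Adj B u := by
          intro w hw
          rw [Finset.mem_erase, SimpleGraph.mem_neighborFinset] at hw
          rw [Finset.mem_bipartiteAbove]
          refine ⟨?_, hw.2⟩
          rw [hB, Finset.mem_filter]
          exact ⟨Finset.mem_univ _, six_le G hG hI hn u hu x hx hcl w hw.2 hw.1⟩
        have h := Finset.card_le_card hsub
        rw [Finset.card_erase_of_mem (by simpa using hx), G.card_neighborFinset_eq_degree, hu] at h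
        exact h)
      simpa [mul_comm] using this
    have e2 : ∑ b ∈ B, (Finset.bipartiteBelow G.Adj A b).card ≤ ∑ v ∈ B, G.degree v := by
      apply Finset.sum_le_sum
      intro b _
      rw [← G.card_neighborFinset_eq_degree]
      apply Finset.card_le_card
      intro w hw
      rw [Finset.mem_bipartiteBelow] at hw
      rw [SimpleGraph.mem_neighborFinset]
      exact hw.2.symm
    omega
  have hsum' : ∑ v ∈ A, G.degree v + ∑ v ∈ B, G.degree v = 2 * G.edgeFinset.card := by
    convert hsum
  omega

theorem main (n : ℕ) : ∀ {V : Type u} [Fintype V] (G : SimpleGraph V) [DecidableRel G.Adj],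
    Fintype.card V = n → 5 ≤ n → NoCut G → 27 * n ≤ 10 * G.edgeFinset.card + 35 := by
  induction n with
  | zero => intros; omega
  | succ n ih =>
    intro V _ G _ hc hn hG
    classical
    by_contra hlt
    have hsum := G.sum_degrees_eq_twice_card_edges
    have hmin : ∀ k, (∀ v, k ≤ G.degree v) → (n + 1) * k ≤ 2 * G.edgeFinset.card := by
      intro k hk
      rw [← hsum, ← hc]
      have := Finset.card_nsmul_le_sum Finset.univ (fun v => G.degree v) k (fun v _ => hk v)
      simpa using this
    have h4 : ∀ v, 4 ≤ G.degree v := by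
      intro v
      by_contra hv
      obtain ⟨T, hT, ⟨w, hw⟩, h3⟩ := nbhd_dense G hG v (by omega)
      have h5 := h3 w hw
      have h6 : T.filter (fun z => G.Adj w z) ⊆ T.erase w := by
        intro z hz
        rw [Finset.mem_filter] at hz
        exact Finset.mem_erase.2 ⟨hz.2.ne', hz.1⟩
      have h7 := Finset.card_le_card h6
      rw [Finset.card_erase_of_mem hw] at h7
      have h8 := Finset.card_le_card hT
      rw [G.card_neighborFinset_eq_degree] at h8
      omega
    by_cases hn5 : n = 4
    · have := hmin 4 h4
      subst hn5
      omega
    have hI : Irred G := by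
      intro _ _ u _ hu
      by_contra hge
      have hcard : Fintype.card ({u}ᶜ : Set V) = n := by
        rw [Fintype.card_compl_set]; simp [hc]
      have h1 := ih ((G ⊔ miss G u).induce ({u}ᶜ : Set V)) hcard (by omega)
        (reduce_noCut G u hu hG)
      have h2 := reduce_card G u
      have h3 : ∀ (i j : Fintype G.edgeSet), (@SimpleGraph.edgeFinset _ G i).card =
          (@SimpleGraph.edgeFinset _ G j).card := by
        intro i j; congr!
      rw [h3 _ inferInstance] at hlt
      omega
    by_cases hn6 : n = 5
    · have := hmin 5 (five_le G hG hI (by omega))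
      subst hn6
      omega
    have := irred_bound G hG hI (by omega)
    omega

end CutAux

theorem stmt1 {V : Type*} [Fintype V] (G : SimpleGraph V) [DecidableRel G.Adj]
    (hn : 5 ≤ Fintype.card V)
    (hcut : ¬ ∃ S : Set V, G.IsCutset S ∧ G.DegenSet 2 S) :
    (27 * (Fintype.card V : ℝ) - 35) / 10 ≤ (G.edgeFinset.card : ℝ) := by
  classical
  have h := CutAux.main (Fintype.card V) G rfl hn hcut
  have h' : (27 * (Fintype.card V : ℝ)) ≤ 10 * (G.edgeFinset.card : ℝ) + 35 := by exact_mod_cast h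
  linarith
end

section
/- Let k be an integer at least 2. If G is a connected finite simple graph of order n at least k+6 and size m at most ((k+3)/2)·n + (k−1)/2, then G has a minimum cut S such that the subgraph of G induced by S is k-degenerate. -/
/-- `W` separates the nonempty set `U` from some vertex. -/
def SepUW {V : Type*} (G : SimpleGraph V) (U W : Finset V) : Prop :=
  U.Nonempty ∧ (∀ u ∈ U, u ∉ W) ∧ (∀ u ∈ U, ∀ x, G.Adj u x → x ∈ U ∨ x ∈ W) ∧ ∃ z, z ∉ U ∧ z ∉ W

theorem SepUW.isCutset {V : Type*} {G : SimpleGraph V} {U W : Finset V} (h : SepUW G U W) :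
    G.IsCutset (W : Set V) := by
  obtain ⟨⟨u, hu⟩, hd, hN, z, hzU, hzW⟩ := h
  intro hp
  have key : ∀ (a b : ((W : Set V)ᶜ : Set V)), (G.induce (W : Set V)ᶜ).Walk a b →
      (a : V) ∈ U → (b : V) ∈ U := by
    intro a b w
    induction w with
    | nil => exact id
    | @cons a b c hab _ ih =>
      intro ha
      apply ih
      have hab' : G.Adj a b := hab
      rcases hN _ ha _ hab' with h | h
      · exact h
      · exact absurd h b.2
  obtain ⟨w⟩ := hp ⟨u, by simpa using hd u hu⟩ ⟨z, by simpa using hzW⟩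
  exact hzU (key _ _ w hu)

theorem exists_sep {V : Type*} [Fintype V] {G : SimpleGraph V} {S : Finset V}
    (h : G.IsCutset (S : Set V)) : ∃ U, SepUW G U S := by
  classical
  unfold SimpleGraph.IsCutset SimpleGraph.Preconnected at h
  push Not at h
  obtain ⟨x, y, hxy⟩ := h
  refine ⟨Finset.univ.filter (fun a => ∃ h : a ∈ ((S : Set V)ᶜ : Set V),
    (G.induce (S : Set V)ᶜ).Reachable x ⟨a, h⟩), ⟨x, ?_⟩, ?_, ?_, y, ?_, ?_⟩
  · simp only [Finset.mem_filter, Finset.mem_univ, true_and]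
    exact ⟨x.2, SimpleGraph.Reachable.refl _⟩
  · intro u hu
    simp only [Finset.mem_filter, Finset.mem_univ, true_and] at hu
    obtain ⟨h, _⟩ := hu
    simpa using h
  · intro u hu z huz
    simp only [Finset.mem_filter, Finset.mem_univ, true_and] at hu ⊢
    obtain ⟨h, hr⟩ := hu
    by_cases hz : z ∈ S
    · exact Or.inr hz
    · left
      refine ⟨by simpa using hz, hr.trans (SimpleGraph.Adj.reachable ?_)⟩
      exact huz
  · simp only [Finset.mem_filter, Finset.mem_univ, true_and]
    rintro ⟨h, hr⟩
    exact hxy hr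
  · exact fun h => y.2 h

set_option linter.unusedSectionVars false
set_option linter.unusedVariables false
set_option maxHeartbeats 1000000

section core
variable {V : Type*} [Fintype V] [DecidableEq V] (G : SimpleGraph V) [DecidableRel G.Adj]

/-- Every vertex of a minimum separator has a neighbor inside. -/
theorem sep_nbr_in {c : ℕ} (hmin : ∀ U W, SepUW G U W → c ≤ W.card) {U W : Finset V}
    (h : SepUW G U W) (hW : W.card = c) {w : V} (hw : w ∈ W) : ∃ x ∈ U, G.Adj w x := by
  by_contra hcon
  push Not at hcon
  obtain ⟨hne, hd, hN, z, hzU, hzW⟩ := h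
  have := hmin U (W.erase w) ⟨hne, fun u hu => by simp [hd u hu], ?_, z, hzU, by simp [hzW]⟩
  · have h2 := Finset.card_erase_lt_of_mem hw
    omega
  · intro u hu x hux
    rcases hN u hu x hux with h | h
    · exact Or.inl h
    · right
      rw [Finset.mem_erase]
      refine ⟨?_, h⟩
      rintro rfl
      exact hcon u hu hux.symm

/-- Every vertex of a minimum separator has a neighbor outside. -/
theorem sep_nbr_out {c : ℕ} (hmin : ∀ U W, SepUW G U W → c ≤ W.card) {U W : Finset V}
    (h : SepUW G U W) (hW : W.card = c) {w : V} (hw : w ∈ W) :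
    ∃ x, x ∉ U ∧ x ∉ W ∧ G.Adj w x := by
  by_contra hcon
  push Not at hcon
  obtain ⟨hne, hd, hN, z, hzU, hzW⟩ := h
  have := hmin (insert w U) (W.erase w) ⟨by simp, ?_, ?_, z, ?_, by simp [hzW]⟩
  · have h2 := Finset.card_erase_lt_of_mem hw
    omega
  · intro u hu
    rw [Finset.mem_insert] at hu
    rcases hu with rfl | hu
    · simp
    · simp [hd u hu]
  · intro u hu x hux
    have hx : x ∈ U ∨ x ∈ W := by
      rw [Finset.mem_insert] at hu
      rcases hu with rfl | hu
      · by_contra hx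
        push Not at hx
        exact hcon x hx.1 hx.2 hux
      · exact hN u hu x hux
    by_cases hxw : x = w
    · simp [hxw]
    · rcases hx with h | h
      · simp [h]
      · simp [h, hxw]
  · rw [Finset.mem_insert]
    rintro (rfl | h)
    · exact hzW hw
    · exact hzU h

theorem card_T {k : ℕ} {T : Finset V} (hne : T.Nonempty)
    (hT : ∀ v ∈ T, k + 1 ≤ (T.filter (G.Adj v)).card) : k + 2 ≤ T.card := by
  obtain ⟨v, hv⟩ := hne
  have h1 := hT v hv
  have h2 : T.filter (G.Adj v) ⊆ T.erase v := by
    intro x hx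
    rw [Finset.mem_filter] at hx
    rw [Finset.mem_erase]
    exact ⟨hx.2.ne', hx.1⟩
  have h3 := Finset.card_le_card h2
  have h4 := Finset.card_erase_add_one hv
  omega

theorem sep_single {v : V} (hd : (G.neighborFinset v).card + 1 < Fintype.card V) :
    SepUW G {v} (G.neighborFinset v) := by
  refine ⟨by simp, by simp, ?_, ?_⟩
  · intro u hu x hux
    rw [Finset.mem_singleton] at hu
    subst hu
    simp [hux]
  · by_contra hcon
    push Not at hcon
    have : (Finset.univ : Finset V) ⊆ insert v (G.neighborFinset v) := by
      intro x _
      rw [Finset.mem_insert]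
      by_cases h : x = v
      · exact Or.inl h
      · exact Or.inr (hcon x (by simpa using h))
    have h1 := Finset.card_le_card this
    have h2 := Finset.card_insert_le v (G.neighborFinset v)
    rw [Finset.card_univ] at h1
    omega

/-- Build a separation from a size bound. -/
theorem sep_mk {U W : Finset V} (hne : U.Nonempty) (hd : ∀ u ∈ U, u ∉ W)
    (hN : ∀ u ∈ U, G.neighborFinset u ⊆ U ∪ W) (hc : U.card + W.card < Fintype.card V) :
    SepUW G U W := by
  refine ⟨hne, hd, ?_, ?_⟩
  · intro u hu x hux
    have := hN u hu (by simpa using hux : x ∈ G.neighborFinset u)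
    simpa using this
  · by_contra hcon
    push Not at hcon
    have : (Finset.univ : Finset V) ⊆ U ∪ W := by
      intro x _
      rw [Finset.mem_union]
      by_cases h : x ∈ U
      · exact Or.inl h
      · exact Or.inr (hcon x h)
    have h1 := Finset.card_le_card this
    have h2 := Finset.card_union_le U W
    rw [Finset.card_univ] at h1
    omega

/-- Counting good vertices. -/
theorem good_count {k : ℕ} (hk : 2 ≤ k) (hlow : ∀ v, k + 3 ≤ G.degree v)
    (hdeg : ∑ v, G.degree v ≤ (k + 3) * Fintype.card V + (k - 1)) (A : Finset V) :
    A.card ≤ (A.filter (fun v => G.degree v = k + 3)).card + (k - 1) := by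
  have h1 : ∑ v, (G.degree v - (k + 3)) + ∑ _v : V, (k + 3) = ∑ v, G.degree v := by
    rw [← Finset.sum_add_distrib]
    apply Finset.sum_congr rfl
    intro v _
    have := hlow v
    omega
  have h2 : ∑ _v : V, (k + 3) = (k + 3) * Fintype.card V := by
    simp [mul_comm]
  have h3 : (A.filter (fun v => ¬ G.degree v = k + 3)).card ≤ ∑ v, (G.degree v - (k + 3)) := by
    calc _ = ∑ v ∈ A.filter (fun v => ¬ G.degree v = k + 3), 1 := by simp
      _ ≤ ∑ v ∈ A.filter (fun v => ¬ G.degree v = k + 3), (G.degree v - (k + 3)) := by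
        apply Finset.sum_le_sum
        intro v hv
        have := (Finset.mem_filter.1 hv).2
        have := hlow v
        omega
      _ ≤ _ := Finset.sum_le_sum_of_subset (Finset.subset_univ _)
  have h4 := Finset.card_filter_add_card_filter_not (s := A) (fun v => G.degree v = k + 3)
  omega

theorem case_k3 {k : ℕ} (hk : 2 ≤ k) (hn : k + 6 ≤ Fintype.card V)
    (hdeg : ∑ v, G.degree v ≤ (k + 3) * Fintype.card V + (k - 1))
    (hlow : ∀ v, k + 3 ≤ G.degree v)
    (hmin : ∀ U W, SepUW G U W → k + 3 ≤ W.card)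
    (hnd : ∀ U W, SepUW G U W → W.card = k + 3 →
      ∃ T ⊆ W, T.Nonempty ∧ ∀ v ∈ T, k + 1 ≤ (T.filter (G.Adj v)).card) : False := by
  have hg := good_count G hk hlow hdeg
  -- pick v
  have h1 := hg Finset.univ
  rw [Finset.card_univ] at h1
  obtain ⟨v, hv⟩ := Finset.card_pos.1
    (by omega : 0 < (Finset.univ.filter (fun v => G.degree v = k + 3)).card)
  have hv : G.degree v = k + 3 := (Finset.mem_filter.1 hv).2
  have hNv : (G.neighborFinset v).card = k + 3 := by rw [G.card_neighborFinset_eq_degree, hv]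
  have hsep := sep_single G (v := v) (by omega)
  obtain ⟨T, hTW, hTne, hT⟩ := hnd _ _ hsep hNv
  have hTc := card_T G hTne hT
  have h2 := hg T
  obtain ⟨u, hu⟩ := Finset.card_pos.1
    (by omega : 0 < (T.filter (fun v => G.degree v = k + 3)).card)
  obtain ⟨huT, hu⟩ := Finset.mem_filter.1 hu
  have huv : G.Adj v u := by simpa using hTW huT
  obtain ⟨x, hxU, hxW, hux⟩ := sep_nbr_out G hmin hsep hNv (hTW huT)
  have hxv : x ≠ v := by simpa using hxU
  have hxW : ¬ G.Adj v x := by simpa using hxW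
  obtain ⟨A, hA⟩ : ∃ A, A = G.neighborFinset v ∩ G.neighborFinset u := ⟨_, rfl⟩
  have hAc : k + 1 ≤ A.card := by
    refine (hT u huT).trans (Finset.card_le_card ?_)
    intro y hy
    rw [Finset.mem_filter] at hy
    rw [hA, Finset.mem_inter]
    exact ⟨hTW hy.1, by simpa using hy.2⟩
  have hmA : ∀ y, y ∈ A ↔ G.Adj v y ∧ G.Adj u y := by
    intro y; simp [hA]
  have hvA : v ∉ A := by simp [hmA]
  have huA : u ∉ A := by simp [hmA]
  have hxA : x ∉ A := by simp [hmA, hxW]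
  have hNu : (G.neighborFinset u).card = k + 3 := by rw [G.card_neighborFinset_eq_degree, hu]
  have hsub : insert v (insert x A) ⊆ G.neighborFinset u := by
    intro y hy
    simp only [Finset.mem_insert] at hy
    rw [SimpleGraph.mem_neighborFinset]
    rcases hy with rfl | rfl | hy
    · exact huv.symm
    · exact hux
    · exact ((hmA y).1 hy).2
  have hcard : (insert v (insert x A)).card = A.card + 2 := by
    rw [Finset.card_insert_of_notMem, Finset.card_insert_of_notMem hxA]
    simp [hvA, hxv.symm]
  have hAc2 : A.card = k + 1 := by
    have := Finset.card_le_card hsub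
    omega
  have hNueq : insert v (insert x A) = G.neighborFinset u :=
    Finset.eq_of_subset_of_card_le hsub (by omega)
  have hsubv : insert u A ⊆ G.neighborFinset v := by
    intro y hy
    simp only [Finset.mem_insert] at hy
    rw [SimpleGraph.mem_neighborFinset]
    rcases hy with rfl | hy
    · exact huv
    · exact ((hmA y).1 hy).1
  have hcuA : (insert u A).card = k + 2 := by
    rw [Finset.card_insert_of_notMem huA]; omega
  have hdiff : (G.neighborFinset v \ insert u A).card = 1 := by
    rw [Finset.card_sdiff_of_subset hsubv]; omega
  obtain ⟨w, hw⟩ := Finset.card_eq_one.1 hdiff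
  have hw' : w ∈ G.neighborFinset v \ insert u A := by rw [hw]; simp
  simp only [Finset.mem_sdiff, SimpleGraph.mem_neighborFinset, Finset.mem_insert, not_or] at hw'
  obtain ⟨hvw, hwu, hwA⟩ := hw'
  have hwx : w ≠ x := by rintro rfl; exact hxW hvw
  obtain ⟨W, hW⟩ : ∃ W, W = insert w (insert x A) := ⟨_, rfl⟩
  have hWc : W.card = k + 3 := by
    rw [hW, Finset.card_insert_of_notMem, Finset.card_insert_of_notMem hxA]
    · omega
    · simp [hwA, hwx]
  have hsep2 : SepUW G {u, v} W := by
    apply sep_mk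
    · simp
    · intro y hy
      simp only [Finset.mem_insert, Finset.mem_singleton] at hy
      rcases hy with rfl | rfl
      · simp [hW, huA, Ne.symm hwu, hux.ne]
      · simp [hW, hvA, hvw.ne, hxv.symm]
    · intro y hy
      simp only [Finset.mem_insert, Finset.mem_singleton] at hy
      rcases hy with rfl | rfl
      · rw [← hNueq]
        intro z hz
        simp only [hW, Finset.mem_insert, Finset.mem_union, Finset.mem_singleton] at hz ⊢
        rcases hz with h | h | h
        · exact Or.inl (Or.inr h)
        · exact Or.inr (Or.inr (Or.inl h))
        · exact Or.inr (Or.inr (Or.inr h))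
      · intro z hz
        by_cases hzz : z ∈ insert u A
        · simp only [hW, Finset.mem_insert, Finset.mem_union, Finset.mem_singleton] at hzz ⊢
          rcases hzz with h | h
          · exact Or.inl (Or.inl h)
          · exact Or.inr (Or.inr (Or.inr h))
        · have : z ∈ G.neighborFinset y \ insert u A := Finset.mem_sdiff.2 ⟨hz, hzz⟩
          rw [hw, Finset.mem_singleton] at this
          simp [hW, this]
    · have := Finset.card_le_two (a := u) (b := v)
      omega
  obtain ⟨T2, hT2W, hT2ne, hT2⟩ := hnd _ _ hsep2 hWc
  have hT2c := card_T G hT2ne hT2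
  have h3 := hg A
  have hdisj : T2 ⊆ W \ A.filter (fun v => G.degree v = k + 3) := by
    intro a ha
    rw [Finset.mem_sdiff]
    refine ⟨hT2W ha, ?_⟩
    intro haA
    obtain ⟨haA, hda⟩ := Finset.mem_filter.1 haA
    obtain ⟨z, hzU, hzW, haz⟩ := sep_nbr_out G hmin hsep2 hWc (hT2W ha)
    simp only [Finset.mem_insert, Finset.mem_singleton, not_or] at hzU
    have hs : insert z (insert u (insert v (T2.filter (G.Adj a)))) ⊆ G.neighborFinset a := by
      intro y hy
      simp only [Finset.mem_insert, Finset.mem_filter] at hy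
      rw [SimpleGraph.mem_neighborFinset]
      rcases hy with rfl | rfl | rfl | hy
      · exact haz
      · exact ((hmA a).1 haA).2.symm
      · exact ((hmA a).1 haA).1.symm
      · exact hy.2
    have hvW : v ∉ W := hsep2.2.1 v (by simp)
    have huW : u ∉ W := hsep2.2.1 u (by simp)
    have hc := Finset.card_le_card hs
    rw [G.card_neighborFinset_eq_degree, hda, Finset.card_insert_of_notMem,
      Finset.card_insert_of_notMem, Finset.card_insert_of_notMem] at hc
    · have := hT2 a ha
      omega
    · simp only [Finset.mem_filter, not_and]; intro h; exact absurd (hT2W h) hvW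
    · simp only [Finset.mem_insert, Finset.mem_filter, not_or, not_and]
      exact ⟨huv.ne', fun h => absurd (hT2W h) huW⟩
    · simp only [Finset.mem_insert, Finset.mem_filter, not_or, not_and]
      exact ⟨hzU.1, hzU.2, fun h => absurd (hT2W h) hzW⟩
  have h5 := Finset.card_le_card hdisj
  rw [Finset.card_sdiff_of_subset] at h5
  · omega
  · intro y hy
    have := (Finset.mem_filter.1 hy).1
    simp [hW, this]

theorem clique_of_nd {k : ℕ} {T W : Finset V} (hTW : T ⊆ W) (hW : W.card = k + 2)
    (hne : T.Nonempty) (hT : ∀ v ∈ T, k + 1 ≤ (T.filter (G.Adj v)).card) :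
    ∀ a ∈ W, ∀ b ∈ W, a ≠ b → G.Adj a b := by
  have hc := card_T G hne hT
  have hTeq : T = W := Finset.eq_of_subset_of_card_le hTW (by omega)
  subst hTeq
  intro a ha b hb hab
  have h2 : T.filter (G.Adj a) ⊆ T.erase a := by
    intro x hx
    rw [Finset.mem_filter] at hx
    rw [Finset.mem_erase]
    exact ⟨hx.2.ne', hx.1⟩
  have h4 := Finset.card_erase_add_one ha
  have h5 := Finset.eq_of_subset_of_card_le h2 (by have := hT a ha; omega)
  have h6 : b ∈ T.erase a := Finset.mem_erase.2 ⟨hab.symm, hb⟩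
  rw [← h5] at h6
  exact (Finset.mem_filter.1 h6).2

/-- Case of no vertices of degree `k+2`. -/
theorem case_L0 {k : ℕ} (hk : 2 ≤ k)
    (hdeg : ∑ v, G.degree v ≤ (k + 3) * Fintype.card V + (k - 1))
    (hlow : ∀ v, k + 3 ≤ G.degree v)
    (hmin : ∀ U W, SepUW G U W → k + 2 ≤ W.card)
    (hcl : ∀ U W, SepUW G U W → W.card = k + 2 → ∀ a ∈ W, ∀ b ∈ W, a ≠ b → G.Adj a b)
    {U W : Finset V} (hsep : SepUW G U W) (hW : W.card = k + 2) : False := by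
  have hg := good_count G hk hlow hdeg W
  obtain ⟨u, hu, u', hu', huu⟩ := Finset.one_lt_card.1
    (by omega : 1 < (W.filter (fun v => G.degree v = k + 3)).card)
  obtain ⟨huW, hu⟩ := Finset.mem_filter.1 hu
  obtain ⟨huW', hu'⟩ := Finset.mem_filter.1 hu'
  have hclW := hcl _ _ hsep hW
  -- unique neighbor in U
  have huniq : ∀ u ∈ W, G.degree u = k + 3 → ∀ x ∈ U, ∀ x' ∈ U, G.Adj u x → G.Adj u x' →
      x = x' := by
    intro u huW hu x hx x' hx' hux hux'
    by_contra hne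
    obtain ⟨y, hyU, hyW, huy⟩ := sep_nbr_out G hmin hsep hW huW
    have hs : insert y (insert x (insert x' (W.erase u))) ⊆ G.neighborFinset u := by
      intro z hz
      simp only [Finset.mem_insert, Finset.mem_erase] at hz
      rw [SimpleGraph.mem_neighborFinset]
      rcases hz with rfl | rfl | rfl | hz
      · exact huy
      · exact hux
      · exact hux'
      · exact hclW u huW z hz.2 hz.1.symm
    have hc := Finset.card_le_card hs
    have hxW := hsep.2.1 x hx
    have hxW' := hsep.2.1 x' hx'
    rw [G.card_neighborFinset_eq_degree, hu, Finset.card_insert_of_notMem,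
      Finset.card_insert_of_notMem, Finset.card_insert_of_notMem,
      Finset.card_erase_of_mem huW] at hc
    · omega
    · simp [hxW']
    · simp [hxW, hne]
    · simp only [Finset.mem_insert, Finset.mem_erase, not_or]
      exact ⟨fun h => hyU (h ▸ hx), fun h => hyU (h ▸ hx'), fun h => hyW h.2⟩
  obtain ⟨x, hxU, hux⟩ := sep_nbr_in G hmin hsep hW huW
  have hxW := hsep.2.1 x hxU
  have hUx : (U.erase x).Nonempty := by
    by_contra hcon
    rw [Finset.not_nonempty_iff_eq_empty] at hcon
    have hs : G.neighborFinset x ⊆ W := by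
      intro y hy
      rw [SimpleGraph.mem_neighborFinset] at hy
      rcases hsep.2.2.1 x hxU y hy with h | h
      · have : y ∈ U.erase x := Finset.mem_erase.2 ⟨hy.ne', h⟩
        rw [hcon] at this
        simp at this
      · exact h
    have h1 := Finset.card_le_card hs
    rw [G.card_neighborFinset_eq_degree] at h1
    have := hlow x
    omega
  obtain ⟨z, hzU, hzW⟩ := hsep.2.2.2
  have hzx : z ≠ x := fun h => hzU (h ▸ hxU)
  have hsep1 : SepUW G (U.erase x) (insert x (W.erase u)) := by
    refine ⟨hUx, ?_, ?_, z, ?_, ?_⟩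
    · intro y hy
      rw [Finset.mem_erase] at hy
      simp [hy.1, hsep.2.1 y hy.2]
    · intro y hy t hyt
      rw [Finset.mem_erase] at hy
      have htu : t ≠ u := by
        rintro rfl
        exact hy.1 (huniq t huW hu y hy.2 x hxU hyt.symm hux)
      by_cases htx : t = x
      · simp [htx]
      · rcases hsep.2.2.1 y hy.2 t hyt with h | h
        · simp [h, htx]
        · simp [h, htu]
    · simp [hzU]
    · simp [hzW, hzx]
  have hc1 : (insert x (W.erase u)).card = k + 2 := by
    rw [Finset.card_insert_of_notMem (by simp [hxW]), Finset.card_erase_of_mem huW]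
    omega
  have hxu' : G.Adj x u' := by
    apply hcl _ _ hsep1 hc1
    · simp
    · simp [huW', Ne.symm huu]
    · rintro rfl; exact hxW huW'
  have hsep2 : SepUW G (U.erase x) (insert x ((W.erase u).erase u')) := by
    refine ⟨hUx, ?_, ?_, z, ?_, ?_⟩
    · intro y hy
      rw [Finset.mem_erase] at hy
      simp [hy.1, hsep.2.1 y hy.2]
    · intro y hy t hyt
      rw [Finset.mem_erase] at hy
      have htu : t ≠ u := by
        rintro rfl
        exact hy.1 (huniq t huW hu y hy.2 x hxU hyt.symm hux)
      have htu' : t ≠ u' := by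
        rintro rfl
        exact hy.1 (huniq t huW' hu' y hy.2 x hxU hyt.symm hxu'.symm)
      by_cases htx : t = x
      · simp [htx]
      · rcases hsep.2.2.1 y hy.2 t hyt with h | h
        · simp [h, htx]
        · simp [h, htu, htu']
    · simp [hzU]
    · simp [hzW, hzx]
  have h1 := hmin _ _ hsep2
  have h2 := Finset.card_insert_le x ((W.erase u).erase u')
  rw [Finset.card_erase_of_mem (by simp [huW', Ne.symm huu]), Finset.card_erase_of_mem huW] at h2
  omega

/-- Neighbors of a low vertex are not low. -/
theorem low_nbr {k : ℕ} (hn : k + 6 ≤ Fintype.card V)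
    (hmin : ∀ U W, SepUW G U W → k + 2 ≤ W.card)
    (hcl : ∀ U W, SepUW G U W → W.card = k + 2 → ∀ a ∈ W, ∀ b ∈ W, a ≠ b → G.Adj a b)
    {v : V} (hv : G.degree v = k + 2) :
    SepUW G {v} (G.neighborFinset v) ∧
    (∀ a b, G.Adj v a → G.Adj v b → a ≠ b → G.Adj a b) ∧
    ∀ u, G.Adj v u → k + 3 ≤ G.degree u := by
  have hNv : (G.neighborFinset v).card = k + 2 := by rw [G.card_neighborFinset_eq_degree, hv]
  have hsep := sep_single G (v := v) (by omega)
  have hcl' : ∀ a b, G.Adj v a → G.Adj v b → a ≠ b → G.Adj a b := by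
    intro a b ha hb hab
    exact hcl _ _ hsep hNv a (by simpa using ha) b (by simpa using hb) hab
  refine ⟨hsep, hcl', ?_⟩
  intro u hu
  have huW : u ∈ G.neighborFinset v := by simpa using hu
  obtain ⟨x, hxU, hxW, hux⟩ := sep_nbr_out G hmin hsep hNv huW
  have hs : insert x (insert v ((G.neighborFinset v).erase u)) ⊆ G.neighborFinset u := by
    intro z hz
    simp only [Finset.mem_insert, Finset.mem_erase, SimpleGraph.mem_neighborFinset] at hz
    rw [SimpleGraph.mem_neighborFinset]
    rcases hz with rfl | rfl | hz
    · exact hux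
    · exact hu.symm
    · exact hcl' u z hu hz.2 hz.1.symm
  have hc := Finset.card_le_card hs
  rw [G.card_neighborFinset_eq_degree, Finset.card_insert_of_notMem,
    Finset.card_insert_of_notMem, Finset.card_erase_of_mem huW] at hc
  · omega
  · simp
  · simp only [Finset.mem_insert, Finset.mem_erase, not_or]
    exact ⟨by simpa using hxU, fun h => hxW h.2⟩

/-- A low vertex has at most one neighbor of degree `k+3`. -/
theorem low_good {k : ℕ} (hn : k + 6 ≤ Fintype.card V)
    (hmin : ∀ U W, SepUW G U W → k + 2 ≤ W.card)
    (hcl : ∀ U W, SepUW G U W → W.card = k + 2 → ∀ a ∈ W, ∀ b ∈ W, a ≠ b → G.Adj a b)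
    {v : V} (hv : G.degree v = k + 2) :
    k + 1 ≤ ((G.neighborFinset v).filter (fun u => k + 4 ≤ G.degree u)).card := by
  have hNv : (G.neighborFinset v).card = k + 2 := by rw [G.card_neighborFinset_eq_degree, hv]
  obtain ⟨hsep, hcl', hnl⟩ := low_nbr G hn hmin hcl hv
  by_contra hcon
  have h4 := Finset.card_filter_add_card_filter_not (s := G.neighborFinset v)
    (fun u => k + 4 ≤ G.degree u)
  obtain ⟨u, hu, u', hu', huu⟩ := Finset.one_lt_card.1
    (by omega : 1 < ((G.neighborFinset v).filter (fun u => ¬ k + 4 ≤ G.degree u)).card)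
  simp only [Finset.mem_filter, SimpleGraph.mem_neighborFinset] at hu hu'
  obtain ⟨hvu, hu⟩ := hu
  obtain ⟨hvu', hu'⟩ := hu'
  have huW : u ∈ G.neighborFinset v := by simpa using hvu
  have huW' : u' ∈ G.neighborFinset v := by simpa using hvu'
  have hdu := hnl u hvu
  have hdu' := hnl u' hvu'
  obtain ⟨x, hxU, hxW, hux⟩ := sep_nbr_out G hmin hsep hNv huW
  have hxv : x ≠ v := by simpa using hxU
  have hNu : ∀ u, G.Adj v u → ¬ k + 4 ≤ G.degree u → G.Adj u x →
      ∀ y, G.Adj u y → y = x ∨ y = v ∨ (G.Adj v y ∧ y ≠ u) := by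
    intro u hvu hu hux
    have huW : u ∈ G.neighborFinset v := by simpa using hvu
    have hs : insert x (insert v ((G.neighborFinset v).erase u)) ⊆ G.neighborFinset u := by
      intro z hz
      simp only [Finset.mem_insert, Finset.mem_erase, SimpleGraph.mem_neighborFinset] at hz
      rw [SimpleGraph.mem_neighborFinset]
      rcases hz with rfl | rfl | hz
      · exact hux
      · exact hvu.symm
      · exact hcl' u z hvu hz.2 hz.1.symm
    have hc : (insert x (insert v ((G.neighborFinset v).erase u))).card = k + 3 := by
      rw [Finset.card_insert_of_notMem, Finset.card_insert_of_notMem,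
        Finset.card_erase_of_mem huW]
      · omega
      · simp
      · simp only [Finset.mem_insert, Finset.mem_erase, not_or]
        exact ⟨hxv, fun h => hxW h.2⟩
    have heq := Finset.eq_of_subset_of_card_le hs
      (by rw [G.card_neighborFinset_eq_degree]; omega)
    intro y hy
    have : y ∈ G.neighborFinset u := by simpa using hy
    rw [← heq] at this
    simp only [Finset.mem_insert, Finset.mem_erase, SimpleGraph.mem_neighborFinset] at this
    rcases this with h | h | h
    · exact Or.inl h
    · exact Or.inr (Or.inl h)
    · exact Or.inr (Or.inr ⟨h.2, h.1⟩)
  have hxW2 : ¬ G.Adj v x := by simpa using hxW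
  have hc1 : (insert x ((G.neighborFinset v).erase u)).card = k + 2 := by
    rw [Finset.card_insert_of_notMem (by simp [hxW2]), Finset.card_erase_of_mem huW]
    omega
  have hsep1 : SepUW G {v, u} (insert x ((G.neighborFinset v).erase u)) := by
    apply sep_mk
    · simp
    · intro y hy
      simp only [Finset.mem_insert, Finset.mem_singleton] at hy
      rcases hy with rfl | rfl
      · simp [hxv.symm]
      · simp [hux.ne]
    · intro y hy t ht
      rw [SimpleGraph.mem_neighborFinset] at ht
      simp only [Finset.mem_insert, Finset.mem_singleton] at hy
      simp only [Finset.mem_union, Finset.mem_insert, Finset.mem_singleton, Finset.mem_erase,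
        SimpleGraph.mem_neighborFinset]
      rcases hy with rfl | rfl
      · by_cases h : t = u
        · exact Or.inl (Or.inr h)
        · exact Or.inr (Or.inr ⟨h, ht⟩)
      · rcases hNu y hvu hu hux t ht with h | h | h
        · exact Or.inr (Or.inl h)
        · exact Or.inl (Or.inl h)
        · exact Or.inr (Or.inr ⟨h.2, h.1⟩)
    · have := Finset.card_le_two (a := v) (b := u)
      omega
  have hxu' : G.Adj x u' := by
    apply hcl _ _ hsep1 hc1
    · simp
    · simp [hvu', Ne.symm huu]
    · rintro rfl; exact hxW huW'
  have hc2 : (insert x (((G.neighborFinset v).erase u).erase u')).card ≤ k + 1 := by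
    refine (Finset.card_insert_le _ _).trans ?_
    rw [Finset.card_erase_of_mem (by simp [hvu', Ne.symm huu]), Finset.card_erase_of_mem huW]
    omega
  have hsep2 : SepUW G {v, u, u'} (insert x (((G.neighborFinset v).erase u).erase u')) := by
    apply sep_mk
    · simp
    · intro y hy
      simp only [Finset.mem_insert, Finset.mem_singleton] at hy
      rcases hy with rfl | rfl | rfl
      · simp [hxv.symm]
      · simp [hux.ne]
      · simp [hxu'.ne']
    · intro y hy t ht
      rw [SimpleGraph.mem_neighborFinset] at ht
      simp only [Finset.mem_insert, Finset.mem_singleton] at hy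
      simp only [Finset.mem_union, Finset.mem_insert, Finset.mem_singleton, Finset.mem_erase,
        SimpleGraph.mem_neighborFinset]
      have h3 : t = x ∨ t = v ∨ G.Adj v t := by
        rcases hy with rfl | rfl | rfl
        · exact Or.inr (Or.inr ht)
        · rcases hNu y hvu hu hux t ht with h | h | h
          · exact Or.inl h
          · exact Or.inr (Or.inl h)
          · exact Or.inr (Or.inr h.1)
        · rcases hNu y hvu' hu' hxu'.symm t ht with h | h | h
          · exact Or.inl h
          · exact Or.inr (Or.inl h)
          · exact Or.inr (Or.inr h.1)
      by_cases h1 : t = u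
      · exact Or.inl (Or.inr (Or.inl h1))
      by_cases h2 : t = u'
      · exact Or.inl (Or.inr (Or.inr h2))
      rcases h3 with h | h | h
      · exact Or.inr (Or.inl h)
      · exact Or.inl (Or.inl h)
      · exact Or.inr (Or.inr ⟨h2, h1, h⟩)
    · have := Finset.card_le_three (a := v) (b := u) (c := u')
      omega
  have := hmin _ _ hsep2
  omega

/-- Total excess. -/
theorem excess_sum {k : ℕ} (hk : 2 ≤ k) (hlow : ∀ v, k + 2 ≤ G.degree v)
    (hdeg : ∑ v, G.degree v ≤ (k + 3) * Fintype.card V + (k - 1)) :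
    ∑ v, (G.degree v - (k + 3)) ≤
      (Finset.univ.filter (fun v => G.degree v = k + 2)).card + (k - 1) := by
  have h1 : ∑ v, (G.degree v - (k + 3)) + ∑ _v : V, (k + 3) =
      ∑ v, G.degree v + ∑ v, (if G.degree v = k + 2 then 1 else 0) := by
    rw [← Finset.sum_add_distrib, ← Finset.sum_add_distrib]
    apply Finset.sum_congr rfl
    intro v _
    have := hlow v
    split_ifs <;> omega
  have h2 : ∑ _v : V, (k + 3) = (k + 3) * Fintype.card V := by
    simp [mul_comm]
  rw [Finset.card_filter]
  omega

theorem low_ell {k : ℕ} (hk : 2 ≤ k) (hn : k + 6 ≤ Fintype.card V)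
    (hlow : ∀ v, k + 2 ≤ G.degree v)
    (hdeg : ∑ v, G.degree v ≤ (k + 3) * Fintype.card V + (k - 1))
    (hmin : ∀ U W, SepUW G U W → k + 2 ≤ W.card)
    (hcl : ∀ U W, SepUW G U W → W.card = k + 2 → ∀ a ∈ W, ∀ b ∈ W, a ≠ b → G.Adj a b)
    {v u : V} (hv : G.degree v = k + 2) (hvu : G.Adj v u) :
    k + 2 + ((G.neighborFinset u).filter (fun y => G.degree y = k + 2)).card ≤ G.degree u := by
  by_contra hcon
  have hNv : (G.neighborFinset v).card = k + 2 := by rw [G.card_neighborFinset_eq_degree, hv]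
  obtain ⟨hsep, hcl', hnl⟩ := low_nbr G hn hmin hcl hv
  have huW : u ∈ G.neighborFinset v := by simpa using hvu
  obtain ⟨L, hL⟩ : ∃ L, L = (G.neighborFinset u).filter (fun y => G.degree y = k + 2) := ⟨_, rfl⟩
  rw [← hL] at hcon
  have hmL : ∀ y, y ∈ L ↔ G.Adj u y ∧ G.degree y = k + 2 := by intro y; simp [hL]
  have hdis : ∀ y ∈ L, y ∉ G.neighborFinset v := by
    intro y hy hy2
    have := hnl y (by simpa using hy2)
    have := ((hmL y).1 hy).2
    omega
  have hs : L ∪ (G.neighborFinset v).erase u ⊆ G.neighborFinset u := by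
    intro z hz
    simp only [Finset.mem_union, Finset.mem_erase, SimpleGraph.mem_neighborFinset, hmL] at hz
    rw [SimpleGraph.mem_neighborFinset]
    rcases hz with hz | hz
    · exact hz.1
    · exact hcl' u z hvu hz.2 hz.1.symm
  have hc : (L ∪ (G.neighborFinset v).erase u).card = L.card + (k + 1) := by
    rw [Finset.card_union_of_disjoint, Finset.card_erase_of_mem huW, hNv]
    · omega
    · rw [Finset.disjoint_left]
      intro y hy hy2
      exact hdis y hy (Finset.mem_erase.1 hy2).2
  have heq := Finset.eq_of_subset_of_card_le hs
      (by rw [G.card_neighborFinset_eq_degree]; omega)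
  have hNL : ∀ v' ∈ L, G.neighborFinset v' ⊆ G.neighborFinset v := by
    intro v' hv' y hy
    obtain ⟨huv', hdv'⟩ := (hmL v').1 hv'
    obtain ⟨_, hcl2, hnl2⟩ := low_nbr G hn hmin hcl hdv'
    rw [SimpleGraph.mem_neighborFinset] at hy
    by_cases hyu : y = u
    · rw [hyu]; exact huW
    · have h1 := hcl2 u y huv'.symm hy (Ne.symm hyu)
      have h2 : y ∈ G.neighborFinset u := by simpa using h1
      rw [← heq, Finset.mem_union] at h2
      rcases h2 with h | h
      · have := hnl2 y hy
        have := ((hmL y).1 h).2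
        omega
      · exact (Finset.mem_erase.1 h).2
  by_cases hz : ∃ z, z ∉ L ∧ z ∉ G.neighborFinset v
  · have hsep2 : SepUW G L (G.neighborFinset v) := by
      refine ⟨⟨v, (hmL v).2 ⟨hvu.symm, hv⟩⟩, hdis, ?_, hz⟩
      intro y hy x hyx
      exact Or.inr (hNL y hy (by simpa using hyx))
    obtain ⟨x, hxL, hxW, hux⟩ := sep_nbr_out G hmin hsep2 hNv huW
    have h2 : x ∈ G.neighborFinset u := by simpa using hux
    rw [← heq, Finset.mem_union] at h2
    rcases h2 with h | h
    · exact hxL h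
    · exact hxW (Finset.mem_erase.1 h).2
  · push Not at hz
    have hcard : Fintype.card V ≤ L.card + (k + 2) := by
      have : (Finset.univ : Finset V) ⊆ L ∪ G.neighborFinset v := by
        intro x _
        rw [Finset.mem_union]
        by_cases h : x ∈ L
        · exact Or.inl h
        · exact Or.inr (hz x h)
      have h1 := Finset.card_le_card this
      have h2 := Finset.card_union_le L (G.neighborFinset v)
      rw [Finset.card_univ] at h1
      omega
    have hLL : (Finset.univ.filter (fun v => G.degree v = k + 2)).card ≤ L.card := by
      apply Finset.card_le_card
      intro y hy
      have hy := (Finset.mem_filter.1 hy).2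
      by_contra h
      have := hnl y (by simpa using hz y h)
      omega
    have hdw : ∀ w ∈ G.neighborFinset v, L.card - 2 ≤ G.degree w - (k + 3) := by
      intro w hw
      have hvw : G.Adj v w := by simpa using hw
      have hs : L ∪ (G.neighborFinset v).erase w ⊆ G.neighborFinset w := by
        intro z hz
        rw [Finset.mem_union] at hz
        rw [SimpleGraph.mem_neighborFinset]
        rcases hz with hz | hz
        · have h1 := Finset.eq_of_subset_of_card_le (hNL z hz)
            (by rw [G.card_neighborFinset_eq_degree, G.card_neighborFinset_eq_degree,
                  ((hmL z).1 hz).2, hv])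
          rw [← h1, SimpleGraph.mem_neighborFinset] at hw
          exact hw.symm
        · simp only [Finset.mem_erase, SimpleGraph.mem_neighborFinset] at hz
          exact hcl' w z hvw hz.2 hz.1.symm
      have hc : (L ∪ (G.neighborFinset v).erase w).card = L.card + (k + 1) := by
        rw [Finset.card_union_of_disjoint, Finset.card_erase_of_mem hw, hNv]
        · omega
        · rw [Finset.disjoint_left]
          intro y hy hy2
          exact hdis y hy (Finset.mem_erase.1 hy2).2
      have := Finset.card_le_card hs
      rw [G.card_neighborFinset_eq_degree] at this
      omega
    have h1 := excess_sum G hk hlow hdeg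
    have h2 : (k + 2) * (L.card - 2) ≤ ∑ v, (G.degree v - (k + 3)) := by
      calc (k + 2) * (L.card - 2) = ∑ w ∈ G.neighborFinset v, (L.card - 2) := by
            rw [Finset.sum_const, hNv, smul_eq_mul]
        _ ≤ ∑ w ∈ G.neighborFinset v, (G.degree w - (k + 3)) := Finset.sum_le_sum hdw
        _ ≤ _ := Finset.sum_le_sum_of_subset (Finset.subset_univ _)
    obtain ⟨j, hj⟩ : ∃ j, L.card = j + 4 := ⟨L.card - 4, by omega⟩
    have h3 : (k + 2) * (j + 2) ≤ (j + 4) + (k - 1) := by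
      have : L.card - 2 = j + 2 := by omega
      rw [this] at h2
      omega
    have h4 : (k + 2) * (j + 2) = k * j + 2 * k + 2 * j + 4 := by ring
    have : 0 ≤ k * j := Nat.zero_le _
    omega

theorem case_k2 {k : ℕ} (hk : 2 ≤ k) (hn : k + 6 ≤ Fintype.card V)
    (hlow : ∀ v, k + 2 ≤ G.degree v)
    (hdeg : ∑ v, G.degree v ≤ (k + 3) * Fintype.card V + (k - 1))
    (hmin : ∀ U W, SepUW G U W → k + 2 ≤ W.card)
    (hcl : ∀ U W, SepUW G U W → W.card = k + 2 → ∀ a ∈ W, ∀ b ∈ W, a ≠ b → G.Adj a b)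
    {U W : Finset V} (hsep : SepUW G U W) (hW : W.card = k + 2) : False := by
  have hex := excess_sum G hk hlow hdeg
  obtain ⟨L, hL⟩ : ∃ L, L = Finset.univ.filter (fun v => G.degree v = k + 2) := ⟨_, rfl⟩
  obtain ⟨B, hB⟩ : ∃ B, B = Finset.univ.filter (fun v => k + 4 ≤ G.degree v) := ⟨_, rfl⟩
  rw [← hL] at hex
  have hmL : ∀ y, y ∈ L ↔ G.degree y = k + 2 := by intro y; simp [hL]
  have hmB : ∀ y, y ∈ B ↔ k + 4 ≤ G.degree y := by intro y; simp [hB]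
  have hBsum : B.card ≤ ∑ v, (G.degree v - (k + 3)) := by
    calc _ = ∑ v ∈ B, 1 := by simp
      _ ≤ ∑ v ∈ B, (G.degree v - (k + 3)) := by
        apply Finset.sum_le_sum
        intro v hv
        have := (hmB v).1 hv
        omega
      _ ≤ _ := Finset.sum_le_sum_of_subset (Finset.subset_univ _)
  have hBv : ∀ v ∈ L, k + 1 ≤ ((G.neighborFinset v).filter (fun u => k + 4 ≤ G.degree u)).card :=
    fun v hv => low_good G hn hmin hcl ((hmL v).1 hv)
  -- double counting
  have hdc : (k + 1) * L.card ≤ 2 * ∑ v, (G.degree v - (k + 3)) := by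
    have e1 : ∑ v ∈ L, (B.filter (fun u => G.Adj v u)).card
        = ∑ u ∈ B, (L.filter (fun v => G.Adj v u)).card :=
      Finset.sum_card_bipartiteAbove_eq_sum_card_bipartiteBelow (fun v u => G.Adj v u)
    have e2 : (k + 1) * L.card ≤ ∑ v ∈ L, (B.filter (fun u => G.Adj v u)).card := by
      calc (k + 1) * L.card = ∑ v ∈ L, (k + 1) := by
            rw [Finset.sum_const, smul_eq_mul, mul_comm]
        _ ≤ _ := by
          apply Finset.sum_le_sum
          intro v hv
          refine (hBv v hv).trans (Finset.card_le_card ?_)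
          intro u hu
          simp only [Finset.mem_filter, SimpleGraph.mem_neighborFinset] at hu ⊢
          exact ⟨(hmB u).2 hu.2, hu.1⟩
    have e3 : ∑ u ∈ B, (L.filter (fun v => G.Adj v u)).card ≤
        ∑ u ∈ B, 2 * (G.degree u - (k + 3)) := by
      apply Finset.sum_le_sum
      intro u hu
      have hu := (hmB u).1 hu
      by_cases h0 : (L.filter (fun v => G.Adj v u)).Nonempty
      · obtain ⟨v, hv⟩ := h0
        obtain ⟨hvL, hvu⟩ := Finset.mem_filter.1 hv
        have h1 := low_ell G hk hn hlow hdeg hmin hcl ((hmL v).1 hvL) hvu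
        have h2 : L.filter (fun v => G.Adj v u) =
            (G.neighborFinset u).filter (fun y => G.degree y = k + 2) := by
          ext y
          simp only [Finset.mem_filter, SimpleGraph.mem_neighborFinset, hmL]
          rw [G.adj_comm]
          exact and_comm
        rw [h2]
        omega
      · rw [Finset.not_nonempty_iff_eq_empty] at h0
        rw [h0]
        simp
    have e4 : ∑ u ∈ B, 2 * (G.degree u - (k + 3)) ≤ 2 * ∑ v, (G.degree v - (k + 3)) := by
      rw [← Finset.mul_sum]
      exact Nat.mul_le_mul_left _ (Finset.sum_le_sum_of_subset (Finset.subset_univ _))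
    omega
  have hL2 : L.card ≤ 2 := by
    by_contra hcon
    obtain ⟨j, hj⟩ : ∃ j, L.card = j + 3 := ⟨L.card - 3, by omega⟩
    obtain ⟨i, hi⟩ : ∃ i, k = i + 2 := ⟨k - 2, by omega⟩
    have h1 : (k + 1) * L.card = i * j + 3 * i + 3 * j + 9 := by rw [hj, hi]; ring
    have : 0 ≤ i * j := Nat.zero_le _
    omega
  have hBvB : ∀ v, (G.neighborFinset v).filter (fun u => k + 4 ≤ G.degree u) ⊆ B := by
    intro v u hu
    exact (hmB u).2 (Finset.mem_filter.1 hu).2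
  obtain h0 | h1 | h2 : L.card = 0 ∨ L.card = 1 ∨ L.card = 2 := by omega
  · rw [Finset.card_eq_zero] at h0
    refine case_L0 G hk hdeg ?_ hmin hcl hsep hW
    intro v
    have h1 := hlow v
    have h2 : v ∉ L := by simp [h0]
    rw [hmL] at h2
    omega
  · obtain ⟨v, hv⟩ := Finset.card_eq_one.1 h1
    have h2 := hBv v (by simp [hv])
    have h3 := Finset.card_le_card (hBvB v)
    omega
  · obtain ⟨v₁, v₂, hne, hLe⟩ := Finset.card_eq_two.1 h2
    have hv1L : v₁ ∈ L := by simp [hLe]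
    have hv2L : v₂ ∈ L := by simp [hLe]
    have hd1 := (hmL _).1 hv1L
    have hd2 := (hmL _).1 hv2L
    have hc1 : (G.neighborFinset v₁).card = k + 2 := by rw [G.card_neighborFinset_eq_degree, hd1]
    have hc2 : (G.neighborFinset v₂).card = k + 2 := by rw [G.card_neighborFinset_eq_degree, hd2]
    have hb1 := hBv v₁ hv1L
    have hb2 := hBv v₂ hv2L
    have hBc := Finset.card_le_card (hBvB v₁)
    have hBc' : B.card = k + 1 := by omega
    have heq1 := Finset.eq_of_subset_of_card_le (hBvB v₁) (by omega)
    have heq2 := Finset.eq_of_subset_of_card_le (hBvB v₂) (by omega)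
    have hs1 : B ⊆ G.neighborFinset v₁ := by rw [← heq1]; exact Finset.filter_subset _ _
    have hs2 : B ⊆ G.neighborFinset v₂ := by rw [← heq2]; exact Finset.filter_subset _ _
    obtain ⟨hsp1, hcl1, hnl1⟩ := low_nbr G hn hmin hcl hd1
    obtain ⟨hsp2, hcl2, hnl2⟩ := low_nbr G hn hmin hcl hd2
    have hv12 : ¬ G.Adj v₁ v₂ := fun h => by have := hnl1 _ h; omega
    by_cases hN : G.neighborFinset v₁ = G.neighborFinset v₂
    · have hsep3 : SepUW G {v₁, v₂} (G.neighborFinset v₁) := by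
        apply sep_mk
        · simp
        · intro y hy
          simp only [Finset.mem_insert, Finset.mem_singleton] at hy
          rcases hy with rfl | rfl
          · simp
          · simpa using hv12
        · intro y hy
          simp only [Finset.mem_insert, Finset.mem_singleton] at hy
          rcases hy with rfl | rfl
          · exact Finset.subset_union_right
          · rw [← hN]; exact Finset.subset_union_right
        · have := Finset.card_le_two (a := v₁) (b := v₂)
          omega
      have hsub : G.neighborFinset v₁ ⊆ B := by
        intro u hu
        rw [hmB]
        obtain ⟨x, hxU, hxW, hux⟩ := sep_nbr_out G hmin hsep3 hc1 hu
        simp only [Finset.mem_insert, Finset.mem_singleton, not_or] at hxU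
        have hu1 : G.Adj v₁ u := by simpa using hu
        have hu2 : G.Adj v₂ u := by rw [hN] at hu; simpa using hu
        have hs : insert x (insert v₁ (insert v₂ ((G.neighborFinset v₁).erase u))) ⊆
            G.neighborFinset u := by
          intro z hz
          simp only [Finset.mem_insert, Finset.mem_erase, SimpleGraph.mem_neighborFinset] at hz
          rw [SimpleGraph.mem_neighborFinset]
          rcases hz with rfl | rfl | rfl | hz
          · exact hux
          · exact hu1.symm
          · exact hu2.symm
          · exact hcl1 u z hu1 hz.2 hz.1.symm
        have hc := Finset.card_le_card hs
        rw [G.card_neighborFinset_eq_degree, Finset.card_insert_of_notMem,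
          Finset.card_insert_of_notMem, Finset.card_insert_of_notMem,
          Finset.card_erase_of_mem hu] at hc
        · omega
        · simp [hv12]
        · simp [hne]
        · simp only [Finset.mem_insert, Finset.mem_erase, not_or]
          exact ⟨hxU.1, hxU.2, fun h => hxW h.2⟩
      have := Finset.card_le_card hsub
      omega
    · have hx1 : (G.neighborFinset v₁ \ B).card = 1 := by
        rw [Finset.card_sdiff_of_subset hs1]; omega
      have hx2 : (G.neighborFinset v₂ \ B).card = 1 := by
        rw [Finset.card_sdiff_of_subset hs2]; omega
      obtain ⟨u₁, hu1⟩ := Finset.card_eq_one.1 hx1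
      obtain ⟨u₂, hu2⟩ := Finset.card_eq_one.1 hx2
      have hm1 : ∀ y, G.Adj v₁ y ↔ y = u₁ ∨ y ∈ B := by
        intro y
        rw [← SimpleGraph.mem_neighborFinset, ← Finset.mem_singleton, ← hu1, Finset.mem_sdiff]
        constructor
        · intro h
          by_cases hy : y ∈ B
          · exact Or.inr hy
          · exact Or.inl ⟨h, hy⟩
        · rintro (h | h)
          · exact h.1
          · exact hs1 h
      have hm2 : ∀ y, G.Adj v₂ y ↔ y = u₂ ∨ y ∈ B := by
        intro y
        rw [← SimpleGraph.mem_neighborFinset, ← Finset.mem_singleton, ← hu2, Finset.mem_sdiff]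
        constructor
        · intro h
          by_cases hy : y ∈ B
          · exact Or.inr hy
          · exact Or.inl ⟨h, hy⟩
        · rintro (h | h)
          · exact h.1
          · exact hs2 h
      have hu12 : u₁ ≠ u₂ := by
        rintro rfl
        apply hN
        ext y
        simp [hm1, hm2]
      have hu1B : u₁ ∉ B := by
        have : u₁ ∈ G.neighborFinset v₁ \ B := by rw [hu1]; simp
        exact (Finset.mem_sdiff.1 this).2
      have hu2B : u₂ ∉ B := by
        have : u₂ ∈ G.neighborFinset v₂ \ B := by rw [hu2]; simp
        exact (Finset.mem_sdiff.1 this).2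
      have hv1u1 : G.Adj v₁ u₁ := (hm1 _).2 (Or.inl rfl)
      have hv2u2 : G.Adj v₂ u₂ := (hm2 _).2 (Or.inl rfl)
      have hv1B : v₁ ∉ B := fun h => by have := (hmB _).1 h; omega
      have hv2B : v₂ ∉ B := fun h => by have := (hmB _).1 h; omega
      have hv1u2 : v₁ ≠ u₂ := by rintro rfl; exact hv12 hv2u2.symm
      have hv2u1 : v₂ ≠ u₁ := by rintro rfl; exact hv12 hv1u1
      -- degrees in B are exactly k+4
      have hdB : ∀ b ∈ B, G.degree b = k + 4 := by
        intro b hb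
        have hb4 := (hmB b).1 hb
        by_contra hnb
        have : B.card + 1 ≤ ∑ v, (G.degree v - (k + 3)) := by
          calc B.card + 1 = ((B.erase b).card) + 2 := by
                have := Finset.card_erase_add_one hb
                omega
            _ ≤ ∑ v ∈ B.erase b, (G.degree v - (k + 3)) + (G.degree b - (k + 3)) := by
                apply Nat.add_le_add
                · rw [Finset.card_eq_sum_ones]
                  apply Finset.sum_le_sum
                  intro y hy
                  have := (hmB y).1 (Finset.mem_erase.1 hy).2
                  omega
                · omega
            _ = ∑ v ∈ B, (G.degree v - (k + 3)) := Finset.sum_erase_add _ _ hb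
            _ ≤ _ := Finset.sum_le_sum_of_subset (Finset.subset_univ _)
        omega
      have hsep4 : SepUW G (insert v₁ (insert v₂ B)) {u₁, u₂} := by
        apply sep_mk
        · simp
        · intro y hy
          simp only [Finset.mem_insert, Finset.mem_singleton, not_or] at hy ⊢
          rcases hy with rfl | rfl | hy
          · exact ⟨hv1u1.ne, hv1u2⟩
          · exact ⟨hv2u1, hv2u2.ne⟩
          · exact ⟨fun h => hu1B (h ▸ hy), fun h => hu2B (h ▸ hy)⟩
        · intro y hy t ht
          rw [SimpleGraph.mem_neighborFinset] at ht
          simp only [Finset.mem_union, Finset.mem_insert, Finset.mem_singleton] at hy ⊢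
          rcases hy with rfl | rfl | hy
          · rcases (hm1 t).1 ht with h | h
            · exact Or.inr (Or.inl h)
            · exact Or.inl (Or.inr (Or.inr h))
          · rcases (hm2 t).1 ht with h | h
            · exact Or.inr (Or.inr h)
            · exact Or.inl (Or.inr (Or.inr h))
          · have hv1y : G.Adj v₁ y := (hm1 y).2 (Or.inr hy)
            have hv2y : G.Adj v₂ y := (hm2 y).2 (Or.inr hy)
            have hs : insert v₁ (insert v₂ (insert u₁ (insert u₂ (B.erase y)))) ⊆
                G.neighborFinset y := by
              intro z hz
              simp only [Finset.mem_insert, Finset.mem_erase] at hz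
              rw [SimpleGraph.mem_neighborFinset]
              rcases hz with rfl | rfl | rfl | rfl | hz
              · exact hv1y.symm
              · exact hv2y.symm
              · exact hcl1 _ _ hv1y hv1u1 (fun h => hu1B (h ▸ hy))
              · exact hcl2 _ _ hv2y hv2u2 (fun h => hu2B (h ▸ hy))
              · exact hcl1 _ _ hv1y ((hm1 z).2 (Or.inr hz.2)) hz.1.symm
            have hc : (insert v₁ (insert v₂ (insert u₁ (insert u₂ (B.erase y))))).card
                = k + 4 := by
              rw [Finset.card_insert_of_notMem, Finset.card_insert_of_notMem,
                Finset.card_insert_of_notMem, Finset.card_insert_of_notMem,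
                Finset.card_erase_of_mem hy]
              · omega
              · simp [hu2B]
              · simp [hu1B, hu12]
              · simp [hv2B, hv2u1, hv2u2.ne]
              · simp [hv1B, hne, hv1u2, hv1u1.ne]
            have heq := Finset.eq_of_subset_of_card_le hs
              (by rw [G.card_neighborFinset_eq_degree, hdB y hy]; omega)
            have h5 : t ∈ G.neighborFinset y := by simpa using ht
            rw [← heq] at h5
            simp only [Finset.mem_insert, Finset.mem_erase] at h5
            rcases h5 with h | h | h | h | h
            · exact Or.inl (Or.inl h)
            · exact Or.inl (Or.inr (Or.inl h))
            · exact Or.inr (Or.inl h)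
            · exact Or.inr (Or.inr h)
            · exact Or.inl (Or.inr (Or.inr h.2))
        · have a1 := Finset.card_insert_le v₁ (insert v₂ B)
          have a2 := Finset.card_insert_le v₂ B
          have := Finset.card_le_two (a := u₁) (b := u₂)
          omega
      have a1 := hmin _ _ hsep4
      have a2 := Finset.card_le_two (a := u₁) (b := u₂)
      omega

theorem core_thm {k c : ℕ} (hk : 2 ≤ k) (hn : k + 6 ≤ Fintype.card V)
    (hdeg : ∑ v, G.degree v ≤ (k + 3) * Fintype.card V + (k - 1))
    (hmin : ∀ U W, SepUW G U W → c ≤ W.card)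
    (hnd : ∀ U W, SepUW G U W → W.card = c →
      ∃ T ⊆ W, T.Nonempty ∧ ∀ v ∈ T, k + 1 ≤ (T.filter (G.Adj v)).card)
    {U W : Finset V} (hsep : SepUW G U W) (hW : W.card = c) : False := by
  have hc2 : k + 2 ≤ c := by
    obtain ⟨T, hTW, hTne, hT⟩ := hnd U W hsep hW
    have := card_T G hTne hT
    have := Finset.card_le_card hTW
    omega
  have hcn : c + 2 ≤ Fintype.card V := by
    obtain ⟨⟨u, hu⟩, hd, hN, z, hzU, hzW⟩ := hsep
    have : (insert u (insert z W)).card ≤ Fintype.card V := Finset.card_le_univ _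
    rw [Finset.card_insert_of_notMem, Finset.card_insert_of_notMem hzW] at this
    · omega
    · simp only [Finset.mem_insert, not_or]
      exact ⟨fun h => hzU (h ▸ hu), hd u hu⟩
  have hlow : ∀ v, c ≤ G.degree v := by
    intro v
    by_contra hcon
    have := hmin _ _ (sep_single G (v := v) (by rw [G.card_neighborFinset_eq_degree]; omega))
    rw [G.card_neighborFinset_eq_degree] at this
    omega
  have hc3 : c ≤ k + 3 := by
    by_contra hcon
    have h1 : ∑ _v : V, (k + 4) ≤ ∑ v, G.degree v := by
      apply Finset.sum_le_sum
      intro v _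
      have := hlow v
      omega
    have h2 : ∑ _v : V, (k + 4) = (k + 3) * Fintype.card V + Fintype.card V := by
      rw [Finset.sum_const, Finset.card_univ, smul_eq_mul]; ring
    omega
  obtain h | h : c = k + 2 ∨ c = k + 3 := by omega
  · subst h
    refine case_k2 G hk hn hlow hdeg hmin ?_ hsep hW
    intro U W hs hw
    obtain ⟨T, hTW, hTne, hT⟩ := hnd U W hs hw
    exact clique_of_nd G hTW hw hTne hT
  · subst h
    exact case_k3 G hk hn hdeg hlow hmin hnd

end core

theorem stmt2 {V : Type*} [Fintype V] (G : SimpleGraph V) [DecidableRel G.Adj]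
    (k : ℕ) (hk : 2 ≤ k) (hconn : G.Connected) (hn : k + 6 ≤ Fintype.card V)
    (hm : (G.edgeFinset.card : ℝ)
        ≤ ((k : ℝ) + 3) / 2 * (Fintype.card V : ℝ) + ((k : ℝ) - 1) / 2) :
    ∃ S : Set V, G.IsCutset S ∧ (∀ T : Set V, G.IsCutset T → S.ncard ≤ T.ncard) ∧
      G.DegenSet k S := by
  classical
  have hdeg : ∑ v, G.degree v ≤ (k + 3) * Fintype.card V + (k - 1) := by
    rw [G.sum_degrees_eq_twice_card_edges]
    obtain ⟨j, rfl⟩ : ∃ j, k = j + 1 := ⟨k - 1, by omega⟩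
    have : (2 * G.edgeFinset.card : ℝ) ≤ ((j + 1 + 3) * Fintype.card V + j : ℝ) := by
      push_cast at hm
      linarith
    simp only [Nat.add_sub_cancel]
    exact_mod_cast this
  -- a cut exists
  have hexcut : ∃ S : Finset V, G.IsCutset (S : Set V) := by
    have : ∃ v, (G.neighborFinset v).card + 1 < Fintype.card V := by
      by_contra hcon
      push Not at hcon
      have h1 : ∑ _v : V, (k + 5) ≤ ∑ v, G.degree v := by
        apply Finset.sum_le_sum
        intro v _
        have := hcon v
        rw [G.card_neighborFinset_eq_degree] at this
        omega
      have h2 : ∑ _v : V, (k + 5) = (k + 3) * Fintype.card V + 2 * Fintype.card V := by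
        rw [Finset.sum_const, Finset.card_univ, smul_eq_mul]; ring
      omega
    obtain ⟨v, hv⟩ := this
    exact ⟨_, (sep_single G hv).isCutset⟩
  obtain ⟨S0, hS0⟩ := hexcut
  obtain ⟨S, hS, hSmin⟩ := Finset.exists_min_image
    (Finset.univ.filter (fun S : Finset V => G.IsCutset (S : Set V))) Finset.card
    ⟨S0, by simpa using hS0⟩
  have hS : G.IsCutset (S : Set V) := (Finset.mem_filter.1 hS).2
  have hSmin : ∀ T : Finset V, G.IsCutset (T : Set V) → S.card ≤ T.card :=
    fun T hT => hSmin T (by simpa using hT)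
  by_contra hcon
  obtain ⟨U, hU⟩ := exists_sep hS
  refine core_thm G (c := S.card) hk hn hdeg (fun U W h => hSmin W h.isCutset) ?_ hU rfl
  intro U W hs hw
  by_contra hnd
  apply hcon
  refine ⟨(W : Set V), hs.isCutset, ?_, ?_⟩
  · intro T hT
    rw [Set.ncard_coe_finset, hw, Set.ncard_eq_toFinset_card']
    apply hSmin
    simpa using hT
  · intro T hTW hTne
    by_contra hT
    push Not at hT
    apply hnd
    refine ⟨T.toFinset, ?_, by simpa using hTne, ?_⟩
    · intro x hx
      exact hTW (by simpa using hx)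
    · intro v hv
      have h1 := hT v (by simpa using hv)
      rw [← Set.ncard_coe_finset]
      simpa using h1
end

section
/- Let G be a finite simple graph of order at least 18 with vertex connectivity at least 5 that has no 2-degenerate cut. If u is a vertex of G of degree exactly 5, then the sum of the degrees in G of the neighbors of u is at least 29. -/
namespace Stmt5Aux

open Finset Classical

variable {V : Type*}

/-- Neighbours of `v` in `A`. -/
noncomputable def nb (G : SimpleGraph V) (A : Finset V) (v : V) : Finset V :=
  A.filter (fun w => G.Adj v w)

/-- Elements of `R` with a neighbour in `X`. -/
noncomputable def NR (G : SimpleGraph V) (R X : Finset V) : Finset V :=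
  R.filter (fun p => (nb G X p).Nonempty)

/-- A subgraph of minimum degree at least three. -/
def Core (G : SimpleGraph V) (T : Finset V) : Prop :=
  T.Nonempty ∧ ∀ v ∈ T, 3 ≤ (nb G T v).card

lemma mem_nb {G : SimpleGraph V} {A : Finset V} {v w : V} :
    w ∈ nb G A v ↔ w ∈ A ∧ G.Adj v w := by simp [nb]

lemma mem_NR {G : SimpleGraph V} {R X : Finset V} {p : V} :
    p ∈ NR G R X ↔ p ∈ R ∧ ∃ x ∈ X, G.Adj p x := by
  simp [NR, Finset.Nonempty, mem_nb]

lemma nb_sub_erase (G : SimpleGraph V) (T : Finset V) (v : V) : nb G T v ⊆ T.erase v := by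
  intro w hw
  rw [mem_nb] at hw
  exact mem_erase.2 ⟨hw.2.ne', hw.1⟩

lemma Core.four_le {G : SimpleGraph V} {T : Finset V} (h : Core G T) : 4 ≤ T.card := by
  obtain ⟨⟨v, hv⟩, h⟩ := h
  have h1 := card_le_card (nb_sub_erase G T v)
  rw [card_erase_of_mem hv] at h1
  have := h v hv
  omega

lemma Core.clique {G : SimpleGraph V} {T : Finset V} (h : Core G T) (h4 : T.card ≤ 4)
    {p q : V} (hp : p ∈ T) (hq : q ∈ T) (hpq : p ≠ q) : G.Adj p q := by
  have h1 := nb_sub_erase G T p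
  have h2 : nb G T p = T.erase p := by
    apply eq_of_subset_of_card_le h1
    rw [card_erase_of_mem hp]
    have := h.2 p hp
    omega
  have : q ∈ nb G T p := by
    rw [h2]; exact mem_erase.2 ⟨hpq.symm, hq⟩
  exact (mem_nb.1 this).2

lemma double_count (G : SimpleGraph V) (R X : Finset V) :
    ∑ x ∈ X, (nb G R x).card = ∑ p ∈ R, (nb G X p).card := by
  simp only [nb, card_filter]
  rw [sum_comm]
  simp only [G.adj_comm]

lemma NR_bound (G : SimpleGraph V) (R X P : Finset V) (hP : P ⊆ R) :
    (NR G R X).card + ∑ p ∈ P, (nb G X p).card ≤ P.card + ∑ x ∈ X, (nb G R x).card := by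
  rw [double_count G R X]
  have h1 : (NR G R X).card = ∑ p ∈ R, (if (nb G X p).Nonempty then 1 else 0) := by
    rw [NR, card_filter]
  rw [h1, ← sum_sdiff hP, ← sum_sdiff hP (f := fun p => (nb G X p).card)]
  have h2 : ∑ p ∈ R \ P, (if (nb G X p).Nonempty then 1 else 0)
      ≤ ∑ p ∈ R \ P, (nb G X p).card := by
    apply sum_le_sum
    intro p _
    split_ifs with h
    · exact h.card_pos
    · omega
  have h3 : ∑ p ∈ P, (if (nb G X p).Nonempty then 1 else 0) ≤ P.card := by
    rw [card_eq_sum_ones]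
    apply sum_le_sum
    intro p _
    split_ifs <;> omega
  omega

lemma NR_card_le (G : SimpleGraph V) (R X : Finset V) :
    (NR G R X).card ≤ ∑ x ∈ X, (nb G R x).card := by
  simpa using NR_bound G R X ∅ (by simp)

lemma NR_single (G : SimpleGraph V) (R : Finset V) (x : V) : NR G R {x} = nb G R x := by
  ext p
  simp [mem_NR, mem_nb, G.adj_comm]

lemma sum_nb_insert (G : SimpleGraph V) (K : Finset V) (w : V) (hw : w ∉ K) :
    ∑ v ∈ insert w K, (nb G (insert w K) v).card
      = ∑ v ∈ K, (nb G K v).card + 2 * (nb G K w).card := by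
  rw [sum_insert hw]
  have h1 : nb G (insert w K) w = nb G K w := by
    ext p; simp only [mem_nb, mem_insert]
    constructor
    · rintro ⟨rfl | h, h2⟩
      · exact absurd h2 (G.irrefl)
      · exact ⟨h, h2⟩
    · rintro ⟨h, h2⟩; exact ⟨Or.inr h, h2⟩
  have h2 : ∀ v ∈ K, (nb G (insert w K) v).card
      = (nb G K v).card + if G.Adj w v then 1 else 0 := by
    intro v hv
    simp only [nb, filter_insert]
    by_cases h : G.Adj v w
    · rw [if_pos h, if_pos h.symm, card_insert_of_notMem]
      simp [hw]
    · rw [if_neg h, if_neg (fun h' => h h'.symm)]; rfl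
  rw [h1, sum_congr rfl h2, sum_add_distrib]
  have : (nb G K w).card = ∑ v ∈ K, if G.Adj w v then 1 else 0 := by
    rw [nb, card_filter]
  omega

lemma sum_nb_even (G : SimpleGraph V) (K : Finset V) :
    ∃ k, ∑ v ∈ K, (nb G K v).card = 2 * k := by
  induction K using Finset.induction_on with
  | empty => exact ⟨0, by simp⟩
  | insert w K hw ih =>
    obtain ⟨k, hk⟩ := ih
    exact ⟨k + (nb G K w).card, by rw [sum_nb_insert G K w hw, hk]; ring⟩

lemma nb_clique (G : SimpleGraph V) (K : Finset V)
    (h : ∀ p ∈ K, ∀ q ∈ K, p ≠ q → G.Adj p q) :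
    ∑ v ∈ K, (nb G K v).card = K.card * (K.card - 1) := by
  rw [sum_const_nat]
  intro v hv
  have : nb G K v = K.erase v := by
    ext w
    simp only [mem_nb, mem_erase]
    constructor
    · rintro ⟨a, b⟩; exact ⟨b.ne', a⟩
    · rintro ⟨a, b⟩; exact ⟨b, h v hv w b a.symm⟩
  rw [this, card_erase_of_mem hv]

/-- Case with at least eight edges inside `N`. -/
lemma caseDense (G : SimpleGraph V) (N R : Finset V) (hN : N.card = 5)
    (hcore : ∀ X ⊆ N, X.card ≤ (NR G R X).card ∧
      ∃ T ⊆ (N \ X) ∪ NR G R X, Core G T)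
    (hsum : ∑ v ∈ N, (nb G N v).card + ∑ v ∈ N, (nb G R v).card ≤ 23)
    (hD : 16 ≤ ∑ v ∈ N, (nb G N v).card) : False := by
  have hpos : ∀ v ∈ N, 1 ≤ (nb G R v).card := by
    intro v hv
    have := (hcore {v} (by simpa using hv)).1
    rwa [NR_single, card_singleton] at this
  have hm5 : 5 ≤ ∑ v ∈ N, (nb G R v).card := by
    have := sum_le_sum hpos
    simpa [hN] using this
  have key : ∀ v ∈ N, (nb G R v).card = 1 → ∀ p ∈ N, ∀ q ∈ N, p ≠ v → q ≠ v → p ≠ q →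
      G.Adj p q := by
    intro v hv hr p hp q hq hpv hqv hpq
    obtain ⟨T, hT, hC⟩ := (hcore {v} (by simpa using hv)).2
    rw [NR_single] at hT
    obtain ⟨a, ha⟩ := card_eq_one.1 hr
    have haR : a ∈ R ∧ G.Adj v a := mem_nb.1 (by rw [ha]; simp)
    have haT : a ∉ T := by
      intro haT
      have h3 := hC.2 a haT
      have hsub : nb G T a ⊆ (nb G N a).erase v := by
        intro z hz
        rw [mem_nb] at hz
        have hz1 := hT hz.1
        rw [ha] at hz1
        have hza : z ≠ a := hz.2.ne'
        simp only [mem_union, mem_sdiff, mem_singleton] at hz1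
        rw [mem_erase, mem_nb]
        tauto
      have h4 := card_le_card hsub
      rw [card_erase_of_mem (mem_nb.2 ⟨hv, haR.2.symm⟩)] at h4
      have h5 := NR_bound G R N {a} (by simpa using haR.1)
      have h6 := (hcore N (Subset.refl _)).1
      simp only [sum_singleton, card_singleton] at h5
      omega
    have hsub : T ⊆ N.erase v := by
      intro z hz
      have hz1 := hT hz
      rw [ha] at hz1
      simp only [mem_union, mem_sdiff, mem_singleton] at hz1
      rw [mem_erase]
      have : z ≠ a := fun h => haT (h ▸ hz)
      tauto
    have hc : (N.erase v).card = 4 := by rw [card_erase_of_mem hv, hN]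
    have hTe : T = N.erase v := eq_of_subset_of_card_le hsub (by rw [hc]; exact hC.four_le)
    apply hC.clique (by rw [hTe, hc]) _ _ hpq
    · rw [hTe]; exact mem_erase.2 ⟨hpv, hp⟩
    · rw [hTe]; exact mem_erase.2 ⟨hqv, hq⟩
  have hQ : 2 < (N.filter (fun v => (nb G R v).card = 1)).card := by
    have h1 : ∑ v ∈ N, 2 ≤ ∑ v ∈ N, ((nb G R v).card + if (nb G R v).card = 1 then 1 else 0) := by
      apply sum_le_sum
      intro v hv
      have := hpos v hv
      split_ifs <;> omega
    rw [sum_add_distrib, ← card_filter, sum_const, hN] at h1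
    simp only [smul_eq_mul] at h1
    omega
  obtain ⟨x, hx, y, hy, z, hz, hxy, hxz, hyz⟩ := two_lt_card.1 hQ
  rw [mem_filter] at hx hy hz
  have hcl : ∀ p ∈ N, ∀ q ∈ N, p ≠ q → G.Adj p q := by
    intro p hp q hq hpq
    by_cases h1 : p ≠ x ∧ q ≠ x
    · exact key x hx.1 hx.2 p hp q hq h1.1 h1.2 hpq
    by_cases h2 : p ≠ y ∧ q ≠ y
    · exact key y hy.1 hy.2 p hp q hq h2.1 h2.2 hpq
    by_cases h3 : p ≠ z ∧ q ≠ z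
    · exact key z hz.1 hz.2 p hp q hq h3.1 h3.2 hpq
    exfalso
    grind
  have := nb_clique G N hcl
  rw [hN] at this
  omega

/-- Case of a `K₄` plus a vertex with at most one neighbour in it. -/
lemma caseSparse (G : SimpleGraph V) (K R : Finset V) (w : V) (hw : w ∉ K) (hK : K.card = 4)
    (hcl : ∀ p ∈ K, ∀ q ∈ K, p ≠ q → G.Adj p q)
    (hcore : ∀ X ⊆ insert w K, X.card ≤ (NR G R X).card ∧
      ∃ T ⊆ (insert w K \ X) ∪ NR G R X, Core G T)
    (ht : (nb G K w).card ≤ 1)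
    (hsum : ∑ v ∈ K, (nb G R v).card + (nb G K w).card ≤ 7) : False := by
  have hpos : ∀ v ∈ K, 1 ≤ (nb G R v).card := by
    intro v hv
    have := (hcore {v} (by simp [hv])).1
    rwa [NR_single, card_singleton] at this
  obtain ⟨x, hx, hxw, hrx⟩ : ∃ x ∈ K, ¬ G.Adj w x ∧ (nb G R x).card = 1 := by
    by_contra! hcon
    have h1 : ∑ v ∈ K, 2 ≤ ∑ v ∈ K, ((nb G R v).card + if G.Adj w v then 1 else 0) := by
      apply sum_le_sum
      intro v hv
      have := hpos v hv
      have := hcon v hv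
      split_ifs with h
      · omega
      · have := this h
        omega
    have h2 : (nb G K w).card = ∑ v ∈ K, if G.Adj w v then 1 else 0 := by
      rw [nb, card_filter]
    rw [sum_add_distrib, ← h2, sum_const, hK] at h1
    simp only [smul_eq_mul] at h1
    omega
  obtain ⟨a, ha⟩ := card_eq_one.1 hrx
  have haR : a ∈ R ∧ G.Adj x a := mem_nb.1 (by rw [ha]; simp)
  have haK : ∀ c ∈ K, G.Adj a c := by
    obtain ⟨T, hT, hC⟩ := (hcore {x} (by simp [hx])).2
    rw [NR_single, ha] at hT
    have hwT : w ∉ T := by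
      intro hwT
      have h3 := hC.2 w hwT
      have hsub : nb G T w ⊆ insert a (nb G K w) := by
        intro z hz
        rw [mem_nb] at hz
        have hz1 := hT hz.1
        have hzw : z ≠ w := hz.2.ne'
        simp only [mem_union, mem_sdiff, mem_singleton, mem_insert] at hz1
        rw [mem_insert, mem_nb]
        tauto
      have h4 := (card_le_card hsub).trans (card_insert_le _ _)
      omega
    have hsub : T ⊆ insert a (K.erase x) := by
      intro z hz
      have hz1 := hT hz
      have hzw : z ≠ w := fun h => hwT (h ▸ hz)
      simp only [mem_union, mem_sdiff, mem_singleton, mem_insert] at hz1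
      rw [mem_insert, mem_erase]
      tauto
    have hc : (insert a (K.erase x)).card ≤ 4 := by
      have := card_insert_le a (K.erase x)
      rw [card_erase_of_mem hx] at this
      omega
    have hTe : T = insert a (K.erase x) :=
      eq_of_subset_of_card_le hsub (hc.trans hC.four_le)
    have haE : a ∉ K.erase x := by
      intro h
      have := hC.four_le
      rw [hTe, insert_eq_of_mem h, card_erase_of_mem hx] at this
      omega
    intro c hc'
    by_cases hcx : c = x
    · subst hcx; exact haR.2.symm
    have hcE : c ∈ K.erase x := mem_erase.2 ⟨hcx, hc'⟩
    apply hC.clique (by rw [hTe]; exact hc)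
    · rw [hTe]; simp
    · rw [hTe]; exact mem_insert_of_mem hcE
    · rintro rfl; exact haE hcE
  have hnbK : ∀ X ⊆ K, nb G X a = X := by
    intro X hX
    apply filter_true_of_mem
    intro c hc; exact haK c (hX hc)
  have hNK := (hcore K (subset_insert _ _)).1
  have hb1 := NR_bound G R K {a} (by simpa using haR.1)
  simp only [sum_singleton, card_singleton, hnbK K (Subset.refl _)] at hb1
  have ht0 : (nb G K w).card = 0 := by omega
  have hwK : ∀ c ∈ K, ¬ G.Adj w c := by
    intro c hc h
    have : c ∈ nb G K w := mem_nb.2 ⟨hc, h⟩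
    rw [card_eq_zero.1 ht0] at this
    simp at this
  have hKx : (K.erase x).card = 3 := by rw [card_erase_of_mem hx, hK]
  obtain ⟨y, hy, hry⟩ : ∃ y ∈ K.erase x, (nb G R y).card ≤ 2 := by
    by_contra! hcon
    have h1 : ∑ v ∈ K.erase x, 3 ≤ ∑ v ∈ K.erase x, (nb G R v).card :=
      sum_le_sum (fun v hv => hcon v hv)
    rw [sum_const, hKx] at h1
    have := add_sum_erase K (fun v => (nb G R v).card) hx
    simp only [smul_eq_mul] at *
    omega
  rw [mem_erase] at hy
  have hXK : ({x, y} : Finset V) ⊆ K := by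
    intro z hz
    simp only [mem_insert, mem_singleton] at hz
    rcases hz with rfl | rfl
    · exact hx
    · exact hy.2
  have hXc : ({x, y} : Finset V).card = 2 := card_pair hy.1.symm
  have hb2 := NR_bound G R {x, y} {a} (by simpa using haR.1)
  simp only [sum_singleton, card_singleton, hnbK _ hXK, sum_pair hy.1.symm, hXc] at hb2
  obtain ⟨T, hT, hC⟩ := (hcore {x, y} (hXK.trans (subset_insert _ _))).2
  have hcT : ∀ c ∈ K \ {x, y}, c ∉ T := by
    intro c hc hcT
    have hcK := (mem_sdiff.1 hc).1
    have hcxy := (mem_sdiff.1 hc).2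
    have hsub : nb G T c ⊆ insert a ((K \ {x, y}).erase c) := by
      intro z hz
      rw [mem_nb] at hz
      have hz1 := hT hz.1
      have hzc : z ≠ c := hz.2.ne'
      have hzw : z ≠ w := by
        rintro rfl
        exact hwK c hcK hz.2.symm
      rw [mem_insert, mem_erase]
      rcases mem_union.1 hz1 with h | h
      · rw [mem_sdiff, mem_insert] at h
        rw [mem_sdiff]
        tauto
      · by_contra hcon
        have hza : z ≠ a := fun h => hcon (Or.inl h)
        obtain ⟨hzR, s, hs, hzs⟩ := mem_NR.1 h
        have hsy : s = y := by
          simp only [mem_insert, mem_singleton] at hs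
          rcases hs with rfl | rfl
          · exfalso
            have : z ∈ nb G R s := mem_nb.2 ⟨hzR, hzs.symm⟩
            rw [ha, mem_singleton] at this
            exact hza this
          · rfl
        subst hsy
        have hb3 := NR_bound G R K {a, z} (by
          intro q hq
          simp only [mem_insert, mem_singleton] at hq
          rcases hq with rfl | rfl
          · exact haR.1
          · exact hzR)
        rw [sum_pair hza.symm, card_pair hza.symm, hnbK K (Subset.refl _)] at hb3
        have hsc : s ≠ c := by
          rintro rfl
          simp at hcxy
        have h2 : ({s, c} : Finset V) ⊆ nb G K z := by
          intro q hq
          simp only [mem_insert, mem_singleton] at hq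
          rcases hq with rfl | rfl
          · exact mem_nb.2 ⟨hy.2, hzs⟩
          · exact mem_nb.2 ⟨hcK, hz.2.symm⟩
        have h3 := card_le_card h2
        rw [card_pair hsc] at h3
        omega
    have h4 := (card_le_card hsub).trans (card_insert_le _ _)
    rw [card_erase_of_mem hc, card_sdiff_of_subset hXK, hXc, hK] at h4
    have := hC.2 c hcT
    omega
  have hsub : T ⊆ insert w (NR G R {x, y}) := by
    intro z hz
    rw [mem_insert]
    rcases mem_union.1 (hT hz) with h | h
    · rw [mem_sdiff, mem_insert] at h
      by_contra hcon
      exact hcT z (mem_sdiff.2 ⟨by tauto, h.2⟩) hz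
    · exact Or.inr h
  have h4 := (card_le_card hsub).trans (card_insert_le _ _)
  have := hC.four_le
  omega

lemma combin (G : SimpleGraph V) (N R : Finset V) (hN : N.card = 5)
    (hcore : ∀ X ⊆ N, (NR G R X).card < 12 → X.card ≤ (NR G R X).card ∧
      ∃ T ⊆ (N \ X) ∪ NR G R X, Core G T)
    (hdeg : ∀ v ∈ N, 4 ≤ (nb G N v).card + (nb G R v).card)
    (hsum : ∑ v ∈ N, (nb G N v).card + ∑ v ∈ N, (nb G R v).card ≤ 23) : False := by
  obtain ⟨T, hT, hC⟩ := (hcore ∅ (by simp) (by simp [NR, nb])).2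
  have hTN : T ⊆ N := by
    intro z hz
    have := hT hz
    simpa [NR, nb] using this
  have h4 := hC.four_le
  have h5 := card_le_card hTN
  have hcore' : 12 ≤ ∑ v ∈ N, (nb G N v).card → ∀ X ⊆ N, X.card ≤ (NR G R X).card ∧
      ∃ T ⊆ (N \ X) ∪ NR G R X, Core G T := by
    intro h12 X hX
    apply hcore X hX
    have h1 := NR_card_le G R X
    have h2 : ∑ x ∈ X, (nb G R x).card ≤ ∑ x ∈ N, (nb G R x).card :=
      sum_le_sum_of_subset hX
    omega
  by_cases hT5 : T.card = 5
  · have hTe : T = N := eq_of_subset_of_card_le hTN (by omega)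
    subst hTe
    have h15 : ∑ v ∈ T, 3 ≤ ∑ v ∈ T, (nb G T v).card := sum_le_sum hC.2
    rw [sum_const, hN, smul_eq_mul] at h15
    obtain ⟨k, hk⟩ := sum_nb_even G T
    exact caseDense G T R hN (hcore' (by omega)) hsum (by omega)
  · have hT4 : T.card = 4 := by omega
    have hcl : ∀ p ∈ T, ∀ q ∈ T, p ≠ q → G.Adj p q :=
      fun p hp q hq hpq => hC.clique hT4.le hp hq hpq
    obtain ⟨w, hw⟩ : ∃ w, N \ T = {w} := by
      rw [← card_eq_one, card_sdiff_of_subset hTN]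
      omega
    have hwN : w ∈ N \ T := by rw [hw]; simp
    rw [mem_sdiff] at hwN
    have hNe : N = insert w T := by
      rw [insert_eq, ← hw, sdiff_union_of_subset hTN]
    subst hNe
    have hD := sum_nb_insert G T w hwN.2
    have hcq := nb_clique G T hcl
    rw [hT4] at hcq
    by_cases ht : 2 ≤ (nb G T w).card
    · exact caseDense G _ R hN (hcore' (by omega)) hsum (by omega)
    · have hs := sum_insert (f := fun v => (nb G R v).card) hwN.2
      have hdw := hdeg w hwN.1
      have h1 : nb G (insert w T) w = nb G T w := by
        rw [nb, filter_insert, if_neg (G.irrefl)]; rfl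
      rw [h1] at hdw
      exact caseSparse G T R w hwN.2 hT4 hcl (hcore' (by omega)) (by omega)
        (by omega)

lemma cutset_of (G : SimpleGraph V) (A S : Set V) (a b : V) (ha : a ∈ A) (hd : ∀ x ∈ A, x ∉ S)
    (hcl : ∀ x ∈ A, ∀ y, G.Adj x y → y ∈ A ∨ y ∈ S) (hbA : b ∉ A) (hbS : b ∉ S) :
    G.IsCutset S := by
  intro hpre
  obtain ⟨p⟩ := hpre ⟨a, hd a ha⟩ ⟨b, hbS⟩
  have : ∀ (x y : (Sᶜ : Set V)), (G.induce Sᶜ).Walk x y → x.1 ∈ A → y.1 ∈ A := by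
    intro x y p
    induction p with
    | nil => exact id
    | cons h _ ih =>
      rename_i v _ _
      intro hx
      apply ih
      rcases hcl _ hx _ h with h' | h'
      · exact h'
      · exact absurd h' v.2
  exact hbA (this _ _ p ha)

end Stmt5Aux

open Stmt5Aux Finset Classical in
theorem stmt5_aux {V : Type*} [Fintype V] (G : SimpleGraph V) [DecidableRel G.Adj]
    (hn : 18 ≤ Fintype.card V)
    (hconn : ∀ S : Set V, (G.IsCutset S ∨ (Sᶜ : Set V).ncard = 1) → 5 ≤ S.ncard)
    (hcut : ¬ ∃ S : Set V, G.IsCutset S ∧ G.DegenSet 2 S)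
    (u : V) (hu : G.degree u = 5) :
    29 ≤ ∑ v ∈ G.neighborFinset u, G.degree v := by
  by_contra hlt
  have hmin : ∀ v, 5 ≤ G.degree v := by
    intro v
    by_contra hv
    have hc : (insert v (G.neighborFinset v)).card < (univ : Finset V).card := by
      have := card_insert_le v (G.neighborFinset v)
      rw [G.card_neighborFinset_eq_degree] at this
      rw [card_univ]
      omega
    obtain ⟨b, -, hb⟩ := exists_mem_notMem_of_card_lt_card hc
    rw [mem_insert, not_or] at hb
    have := hconn (G.neighborFinset v : Set V) (Or.inl (cutset_of G {v} _ v b rfl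
      (by rintro x rfl; simp) (by rintro x rfl y hy; right; simpa using hy) (by simpa using hb.1)
      (by simpa using hb.2)))
    rw [Set.ncard_coe_finset, G.card_neighborFinset_eq_degree] at this
    omega
  set N := G.neighborFinset u with hNdef
  have hNc : N.card = 5 := by rw [hNdef, G.card_neighborFinset_eq_degree, hu]
  have huN : u ∉ N := by simp [hNdef]
  have hmN : ∀ v, v ∈ N ↔ G.Adj u v := by simp [hNdef]
  set R := univ \ insert u N with hR
  have hmR : ∀ v, v ∈ R ↔ v ≠ u ∧ v ∉ N := by simp [hR]
  have hRc : 12 ≤ R.card := by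
    rw [hR, card_sdiff_of_subset (subset_univ _), card_insert_of_notMem huN, hNc, card_univ]
    omega
  have hdeg : ∀ v ∈ N, G.degree v = 1 + ((nb G N v).card + (nb G R v).card) := by
    intro v hv
    have huv := (hmN v).1 hv
    have h1 : G.neighborFinset v = insert u (nb G N v ∪ nb G R v) := by
      ext z
      simp only [SimpleGraph.mem_neighborFinset, mem_insert, mem_union, mem_nb, hmR]
      by_cases hz : z = u
      · subst hz; simp [huv.symm]
      · tauto
    rw [← G.card_neighborFinset_eq_degree, h1, card_insert_of_notMem, card_union_of_disjoint]
    · omega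
    · rw [disjoint_left]
      intro z hz hz'
      rw [mem_nb] at hz hz'
      exact ((hmR z).1 hz'.1).2 hz.1
    · simp [mem_nb, huN, hmR]
  apply combin G N R hNc
  · intro X hX hX12
    obtain ⟨b, hbR, hb⟩ := exists_mem_notMem_of_card_lt_card (lt_of_lt_of_le hX12 hRc)
    rw [hmR] at hbR
    have hC : G.IsCutset (((N \ X) ∪ NR G R X : Finset V) : Set V) := by
      apply cutset_of G (insert u X : Finset V) _ u b
      · simp
      · intro x hx
        simp only [mem_coe, mem_insert, mem_union, mem_sdiff, mem_NR, hmR] at hx ⊢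
        rcases hx with rfl | hx
        · tauto
        · have := hX hx
          tauto
      · intro x hx y hxy
        simp only [mem_coe, mem_insert, mem_union, mem_sdiff, mem_NR, hmR] at hx ⊢
        rcases hx with rfl | hx
        · have := (hmN y).2 hxy
          tauto
        · have : ∃ x ∈ X, G.Adj y x := ⟨x, hx, hxy.symm⟩
          tauto
      · simp only [mem_coe, mem_insert, not_or]
        exact ⟨hbR.1, fun h => hbR.2 (hX h)⟩
      · simp only [mem_coe, mem_union, mem_sdiff, not_or]
        tauto
    constructor
    · have h5 := hconn _ (Or.inl hC)
      rw [Set.ncard_coe_finset] at h5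
      have h6 := card_union_le (N \ X) (NR G R X)
      rw [card_sdiff_of_subset hX] at h6
      have := card_le_card hX
      omega
    · have hnd : ¬ G.DegenSet 2 (((N \ X) ∪ NR G R X : Finset V) : Set V) :=
        fun h => hcut ⟨_, hC, h⟩
      unfold SimpleGraph.DegenSet at hnd
      push Not at hnd
      obtain ⟨T, hT, hne, hT3⟩ := hnd
      refine ⟨T.toFinset, ?_, ?_, ?_⟩
      · intro z hz
        exact mem_coe.1 (hT (by simpa using hz))
      · simpa using hne
      · intro v hv
        have h3 := hT3 v (by simpa using hv)
        have : {w | w ∈ T ∧ G.Adj v w} = (nb G T.toFinset v : Set V) := by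
          ext z; simp [mem_nb]
        rw [this, Set.ncard_coe_finset] at h3
        omega
  · intro v hv
    have := hdeg v hv
    have := hmin v
    omega
  · rw [sum_congr rfl hdeg, sum_add_distrib, sum_add_distrib, sum_const, hNc, smul_eq_mul] at hlt
    omega

theorem stmt5 {V : Type*} [Fintype V] (G : SimpleGraph V) [DecidableRel G.Adj]
    (hn : 18 ≤ Fintype.card V)
    (hconn : ∀ S : Set V, (G.IsCutset S ∨ (Sᶜ : Set V).ncard = 1) → 5 ≤ S.ncard)
    (hcut : ¬ ∃ S : Set V, G.IsCutset S ∧ G.DegenSet 2 S)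
    (u : V) (hu : G.degree u = 5) :
    29 ≤ ∑ v ∈ G.neighborFinset u, G.degree v := by
  exact stmt5_aux G hn hconn hcut u hu
end
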